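/- arXiv:2406.06268 — 2 statements merged into one kernel-verified Lean document; each statement's English description precedes it below -/
import Mathlib

section
/- Let N ≥ 1 be an integer, 1 < p ≤ q < ∞ with p' = p/(p−1), and let σ, κ ∈ ℝ. There exists a constant C > 0 such that ( ∫_{ℝ^N} |𝓕f(ξ)|^q |ξ|^{−qσ} dξ )^{1/q} ≤ C ( ∫_{ℝ^N} |f(x)|^p |x|^{pκ} dx )^{1/p} for all f ∈ C_c^∞(ℝ^N), if and only if κ − σ = N(1 − 1/p − 1/q), 0 ≤ σ < N/q, and 0 ≤ κ < N/p'. -/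
open MeasureTheory Set ENNReal

/-- The Fourier transform `𝓕f(ξ) = ∫ f(x) e^{-i⟨ξ,x⟩} dx` on `ℝ^N`. -/
noncomputable def FT {N : ℕ} (f : EuclideanSpace ℝ (Fin N) → ℂ)
    (ξ : EuclideanSpace ℝ (Fin N)) : ℂ :=
  ∫ x, f x * Complex.exp (-(Complex.I * ((inner ℝ ξ x : ℝ) : ℂ)))

lemma weight_lower {α : Type*} [MeasurableSpace α] (μ : Measure α) (ρ : α → ℝ) (hρ : Measurable ρ)
    (v d a : ℝ) (hv : 0 < v) (hd : 0 < d) (ha : 0 ≤ a)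
    (hball : ∀ R : ℝ, 0 < R → μ {x | ρ x < R} ≤ ENNReal.ofReal (v * R ^ d)) :
    ∃ c : ℝ, 0 < c ∧ ∀ E, MeasurableSet E → μ E ≠ ∞ →
      ENNReal.ofReal c * μ E ^ (1 + a / d) ≤ ∫⁻ x in E, ENNReal.ofReal (ρ x ^ a) ∂μ := by
  refine ⟨(1 / (2 * v)) ^ (a / d) / 2, by positivity, fun E hE hfin => ?_⟩
  have had : 0 ≤ a / d := by positivity
  rcases eq_or_ne (μ E) 0 with h0 | h0
  · rw [h0, ENNReal.zero_rpow_of_pos (by positivity)]; simp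
  obtain ⟨m, hm⟩ : ∃ m : ℝ, m = (μ E).toReal := ⟨_, rfl⟩
  have hmpos : 0 < m := by rw [hm]; exact ENNReal.toReal_pos h0 hfin
  have hmE : μ E = ENNReal.ofReal m := by rw [hm, ENNReal.ofReal_toReal hfin]
  set R : ℝ := (m / (2 * v)) ^ (1 / d) with hR
  have hRpos : 0 < R := by positivity
  have hRd : v * R ^ d = m / 2 := by
    rw [hR, ← Real.rpow_mul (by positivity), one_div_mul_cancel hd.ne', Real.rpow_one]
    field_simp
  have hRa : R ^ a = (1 / (2 * v)) ^ (a / d) * m ^ (a / d) := by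
    rw [hR, ← Real.rpow_mul (by positivity), ← Real.mul_rpow (by positivity) (by positivity)]
    congr 1
    · ring
    · ring
  have hmeas : MeasurableSet {x | ρ x < R} := measurableSet_lt hρ measurable_const
  have h1 : ENNReal.ofReal (m / 2) ≤ μ (E \ {x | ρ x < R}) := by
    have h2 : μ E ≤ μ (E \ {x | ρ x < R}) + μ {x | ρ x < R} := by
      refine (measure_mono ?_).trans (measure_union_le _ _)
      intro x hx
      by_cases h : ρ x < R
      · right; exact h
      · left; exact ⟨hx, h⟩
    have h3 := hball R hRpos
    rw [hRd] at h3
    have h4 : ENNReal.ofReal (m / 2) + ENNReal.ofReal (m / 2)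
        ≤ μ (E \ {x | ρ x < R}) + ENNReal.ofReal (m / 2) := by
      rw [← ENNReal.ofReal_add (by positivity) (by positivity), add_halves, ← hmE]
      exact h2.trans (by gcongr)
    exact (ENNReal.add_le_add_iff_right ENNReal.ofReal_ne_top).1 h4
  calc ENNReal.ofReal ((1 / (2 * v)) ^ (a / d) / 2) * μ E ^ (1 + a / d)
      = ENNReal.ofReal (R ^ a) * ENNReal.ofReal (m / 2) := by
        rw [hmE, ENNReal.ofReal_rpow_of_pos hmpos, ← ENNReal.ofReal_mul (by positivity),
          ← ENNReal.ofReal_mul (by positivity), hRa, Real.rpow_add hmpos, Real.rpow_one]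
        congr 1; ring
    _ ≤ ENNReal.ofReal (R ^ a) * μ (E \ {x | ρ x < R}) := by gcongr
    _ = ∫⁻ x in E \ {x | ρ x < R}, ENNReal.ofReal (R ^ a) ∂μ := by simp
    _ ≤ ∫⁻ x in E \ {x | ρ x < R}, ENNReal.ofReal (ρ x ^ a) ∂μ := by
        refine setLIntegral_mono' (hE.diff hmeas) fun x hx => ?_
        apply ENNReal.ofReal_le_ofReal
        exact Real.rpow_le_rpow hRpos.le (not_lt.1 hx.2) ha
    _ ≤ _ := lintegral_mono_set sdiff_subset

lemma tsum_lp_mono (b : ℤ → ℝ≥0∞) (s t : ℝ) (hs : 0 < s) (hst : s ≤ t) :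
    (∑' k, b k ^ t) ^ (1 / t) ≤ (∑' k, b k ^ s) ^ (1 / s) := by
  have ht : 0 < t := hs.trans_le hst
  set S := ∑' k, b k ^ s with hS
  have hb : ∀ k, b k ≤ S ^ (1 / s) := fun k => by
    rw [one_div, ENNReal.le_rpow_inv_iff hs]; exact ENNReal.le_tsum k
  rw [one_div t, ENNReal.rpow_inv_le_iff ht]
  calc ∑' k, b k ^ t = ∑' k, b k ^ s * b k ^ (t - s) := by
        congr 1; ext k
        rw [← ENNReal.rpow_add_of_nonneg _ _ hs.le (by linarith)]; congr 1; ring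
    _ ≤ ∑' k, b k ^ s * (S ^ (1 / s)) ^ (t - s) := by
        gcongr with k
        exact hb k
    _ = S * (S ^ (1 / s)) ^ (t - s) := by rw [ENNReal.tsum_mul_right]
    _ = (S ^ (1 / s)) ^ s * (S ^ (1 / s)) ^ (t - s) := by
        rw [← ENNReal.rpow_mul S (1 / s) s, one_div_mul_cancel hs.ne', ENNReal.rpow_one]
    _ = (S ^ (1 / s)) ^ t := by
        rw [← ENNReal.rpow_add_of_nonneg _ _ hs.le (by linarith)]; congr 1; ring

lemma discrete_young (a b ψ : ℤ → ℝ≥0∞) (p q' : ℝ) (hp : 1 < p) (hq' : 0 < q')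
    (h : q' ≤ p / (p - 1)) :
    ∑' k, ∑' j, ψ (k + j) * (a k * b j) ≤
      (∑' n, ψ n) * ((∑' k, a k ^ p) ^ (1 / p) * (∑' k, b k ^ q') ^ (1 / q')) := by
  have e1 : ∑' k, ∑' j, ψ (k + j) * (a k * b j) = ∑' n, ψ n * ∑' k, a k * b (n - k) := by
    have : ∀ k, ∑' j, ψ (k + j) * (a k * b j) = ∑' n, ψ n * (a k * b (n - k)) := by
      intro k
      rw [← (Equiv.addLeft k).tsum_eq (fun n => ψ n * (a k * b (n - k)))]
      simp
    simp_rw [this]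
    rw [ENNReal.tsum_comm]
    simp_rw [ENNReal.tsum_mul_left]
  rw [e1, ← ENNReal.tsum_mul_right]
  refine ENNReal.tsum_le_tsum fun n => ?_
  gcongr
  have hc : p.HolderConjugate (p / (p - 1)) := Real.HolderConjugate.conjExponent hp
  have := ENNReal.lintegral_mul_le_Lp_mul_Lq (Measure.count : Measure ℤ) hc
    (f := a) (g := fun k => b (n - k)) (by fun_prop) (by fun_prop)
  simp only [lintegral_count, Pi.mul_apply] at this
  refine this.trans ?_
  gcongr
  have e2 := (Equiv.subLeft n).tsum_eq (fun k => b k ^ (p / (p - 1)))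
  simp only [Equiv.subLeft_apply] at e2
  rw [e2]
  exact tsum_lp_mono b _ _ hq' h

lemma layer_bound {α : Type*} [MeasurableSpace α] (μ : Measure α) [SFinite μ] (f h : α → ℂ)
    (hf : Integrable f μ) (hfm : Measurable f) (hh : AEStronglyMeasurable h μ) (M : ℝ)
    (hM : ∀ x, ‖h x‖ ≤ M) :
    ‖∫ x, f x * h x ∂μ‖ₑ ≤ ∫⁻ s in Ioi (0 : ℝ),
      ‖∫ x, {x | s < ‖f x‖}.indicator (fun x => f x / ‖f x‖) x * h x ∂μ‖ₑ := by
  have key : ∀ x, ∫ s in Ioi (0 : ℝ), {x | s < ‖f x‖}.indicator (fun x => f x / ‖f x‖) x * h x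
      = f x * h x := by
    intro x
    have : ∀ s, {x | s < ‖f x‖}.indicator (fun x => f x / ‖f x‖) x * h x
      = (Iio ‖f x‖).indicator (fun _ => f x / ‖f x‖ * h x) s := by
      intro s
      by_cases hs : s < ‖f x‖
      · simp [indicator, hs]
      · simp [indicator, hs]
    simp_rw [this]
    rw [integral_indicator measurableSet_Iio, Measure.restrict_restrict measurableSet_Iio]
    rw [setIntegral_const, Set.inter_comm, Ioi_inter_Iio]
    simp only [measureReal_def, Real.volume_Ioo, sub_zero, ENNReal.toReal_ofReal (norm_nonneg _)]
    by_cases h0 : f x = 0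
    · simp [h0]
    · have : (‖f x‖ : ℂ) ≠ 0 := by simpa using h0
      rw [Complex.real_smul]; field_simp
  have hmeas : MeasurableSet {z : α × ℝ | z.2 < ‖f z.1‖} :=
    measurableSet_lt measurable_snd (hfm.comp measurable_fst).norm
  have hm : AEStronglyMeasurable (Function.uncurry fun x s =>
      {x | s < ‖f x‖}.indicator (fun x => f x / ‖f x‖) x * h x)
      (μ.prod (volume.restrict (Ioi (0:ℝ)))) := by
    have h1 : (fun z : α × ℝ => {z : α × ℝ | z.2 < ‖f z.1‖}.indicator (fun z => f z.1 / ‖f z.1‖) z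
        * h z.1) = (Function.uncurry fun x s =>
      {x | s < ‖f x‖}.indicator (fun x => f x / ‖f x‖) x * h x) := by
      ext ⟨x, s⟩
      simp [indicator, Function.uncurry]
    rw [← h1]
    refine AEStronglyMeasurable.mul ?_ hh.comp_fst
    apply Measurable.aestronglyMeasurable
    apply Measurable.indicator _ hmeas
    fun_prop
  have hintg : Integrable (Function.uncurry fun x s =>
      {x | s < ‖f x‖}.indicator (fun x => f x / ‖f x‖) x * h x)
      (μ.prod (volume.restrict (Ioi (0:ℝ)))) := by
    refine ⟨hm, ?_⟩
    rw [hasFiniteIntegral_iff_enorm, lintegral_prod _ hm.enorm]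
    simp only [Function.uncurry]
    calc _ ≤ ∫⁻ x, ‖f x‖ₑ * ENNReal.ofReal M ∂μ := by
            refine lintegral_mono fun x => ?_
            calc _ ≤ ∫⁻ s in Ioi (0:ℝ), (Iio ‖f x‖).indicator (fun _ => ENNReal.ofReal M) s := by
                  refine lintegral_mono fun s => ?_
                  by_cases hs : s < ‖f x‖
                  · simp only [indicator, mem_ofPred_eq, hs, if_true, mem_Iio]
                    rw [← ofReal_norm]
                    apply ENNReal.ofReal_le_ofReal
                    rw [norm_mul, norm_div]
                    simp only [Complex.norm_real, norm_norm]
                    calc _ ≤ 1 * ‖h x‖ := by gcongr; exact div_self_le_one _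
                      _ ≤ M := by simpa using hM x
                  · simp [indicator, hs]
              _ = _ := by
                  rw [lintegral_indicator measurableSet_Iio,
                    Measure.restrict_restrict measurableSet_Iio, setLIntegral_const,
                    Set.inter_comm, Ioi_inter_Iio]
                  simp [mul_comm]
      _ < ∞ := by
            rw [lintegral_mul_const'' _ hf.1.enorm]
            exact ENNReal.mul_lt_top hf.2 ENNReal.ofReal_lt_top
  calc ‖∫ x, f x * h x ∂μ‖ₑ = ‖∫ x, (∫ s in Ioi (0 : ℝ),
        {x | s < ‖f x‖}.indicator (fun x => f x / ‖f x‖) x * h x) ∂μ‖ₑ := by simp_rw [key]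
    _ = ‖∫ s in Ioi (0 : ℝ), (∫ x,
        {x | s < ‖f x‖}.indicator (fun x => f x / ‖f x‖) x * h x ∂μ)‖ₑ := by
        rw [integral_integral_swap hintg]
    _ ≤ _ := enorm_integral_le_lintegral_enorm _

lemma tsum_psi_lt_top (c : ℝ≥0∞) (hc : c ≠ ∞) (r : ℝ) (hr1 : 1 < r) (hr2 : r < 2) :
    ∑' n : ℤ, min (4 * (2:ℝ≥0∞) ^ n) (c * (4 * (2:ℝ≥0∞) ^ n) ^ (1 / 2 : ℝ))
      * ((2:ℝ≥0∞) ^ n) ^ (-(1 / r)) < ∞ := by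
  have hz : ∀ (n : ℤ), (2:ℝ≥0∞) ^ n = (2:ℝ≥0∞) ^ (n : ℝ) := fun n => (ENNReal.rpow_intCast _ _).symm
  have hgeo : ∀ x : ℝ, 0 < x → ∑' n : ℕ, ((2:ℝ≥0∞) ^ (-x)) ^ n < ∞ := by
    intro x hx
    rw [ENNReal.tsum_geometric]
    rw [ENNReal.inv_lt_top, tsub_pos_iff_lt]
    exact ENNReal.rpow_lt_one_of_one_lt_of_neg (by norm_num) (by linarith)
  have hr' : 1 / r < 1 := by rw [div_lt_one] <;> linarith
  have hr'' : 1 / 2 < 1 / r := one_div_lt_one_div_of_lt (by linarith) hr2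
  have h2 : (2:ℝ≥0∞) ≠ 0 := by norm_num
  have h2' : (2:ℝ≥0∞) ≠ ∞ := by norm_num
  rw [tsum_of_nat_of_neg_add_one ENNReal.summable ENNReal.summable]
  apply ENNReal.add_lt_top.2 ⟨?_, ?_⟩
  · calc _ ≤ ∑' n : ℕ, (c * 4 ^ (1 / 2 : ℝ)) * ((2:ℝ≥0∞) ^ (-(1 / r - 1 / 2))) ^ n := by
          refine ENNReal.tsum_le_tsum fun n => ?_
          refine (mul_le_mul_left (min_le_right _ _) _).trans (le_of_eq ?_)
          rw [ENNReal.mul_rpow_of_nonneg _ _ (by norm_num), hz, ← ENNReal.rpow_mul,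
            ← ENNReal.rpow_mul, ← ENNReal.rpow_natCast, ← ENNReal.rpow_mul, ← mul_assoc, mul_assoc,
            ← ENNReal.rpow_add _ _ h2 h2']
          congr 2
          push_cast; ring
      _ < ∞ := by
          rw [ENNReal.tsum_mul_left]
          refine ENNReal.mul_lt_top (ENNReal.mul_lt_top hc.lt_top ?_) (hgeo _ (by linarith))
          exact ENNReal.rpow_lt_top_of_nonneg (by norm_num) (by norm_num)
  · calc _ ≤ ∑' n : ℕ, (4 * (2:ℝ≥0∞) ^ (-(1 - 1 / r))) * ((2:ℝ≥0∞) ^ (-(1 - 1 / r))) ^ n := by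
          refine ENNReal.tsum_le_tsum fun n => ?_
          refine (mul_le_mul_left (min_le_left _ _) _).trans (le_of_eq ?_)
          rw [hz, ← ENNReal.rpow_mul, ← ENNReal.rpow_natCast, ← ENNReal.rpow_mul, mul_assoc,
            mul_assoc, ← ENNReal.rpow_add _ _ h2 h2', ← ENNReal.rpow_add _ _ h2 h2']
          congr 2
          push_cast; ring
      _ < ∞ := by
          rw [ENNReal.tsum_mul_left]
          refine ENNReal.mul_lt_top (ENNReal.mul_lt_top (by norm_num) ?_) (hgeo _ (by linarith))
          exact (ENNReal.rpow_ne_top_of_ne_zero h2 h2').lt_top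

def dyS (m : ℝ → ℝ≥0∞) (k : ℤ) : Set ℝ := Ioi 0 ∩ m ⁻¹' (Ico (2 ^ k) (2 ^ (k + 1)))

lemma dyS_meas {m : ℝ → ℝ≥0∞} (hm : Measurable m) (k : ℤ) : MeasurableSet (dyS m k) :=
  measurableSet_Ioi.inter (hm measurableSet_Ico)

lemma zpow_mono2 : StrictMono (fun k : ℤ => (2:ℝ≥0∞) ^ k) := by
  intro a b h
  simp only [← ENNReal.rpow_intCast]
  exact ENNReal.rpow_lt_rpow_of_exponent_lt (by norm_num) (by norm_num) (by exact_mod_cast h)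

lemma dyS_disj (m : ℝ → ℝ≥0∞) : Pairwise (Function.onFun Disjoint (dyS m)) := by
  intro j k hjk
  rw [Function.onFun, Set.disjoint_left]
  rintro s ⟨_, h1⟩ ⟨_, h2⟩
  have a1 := zpow_mono2.lt_iff_lt.1 (h1.1.trans_lt h2.2)
  have a2 := zpow_mono2.lt_iff_lt.1 (h2.1.trans_lt h1.2)
  omega

lemma lintegral_dyS {m : ℝ → ℝ≥0∞} (hm : Measurable m) (hfin : ∀ s, 0 < s → m s ≠ ∞)
    (F : ℝ → ℝ≥0∞) (hF : ∀ s, m s = 0 → F s = 0) :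
    ∫⁻ s in Ioi (0:ℝ), F s = ∑' k, ∫⁻ s in dyS m k, F s := by
  rw [← lintegral_iUnion (dyS_meas hm) (dyS_disj m)]
  rw [← lintegral_indicator measurableSet_Ioi, ← lintegral_indicator (MeasurableSet.iUnion (dyS_meas hm))]
  congr 1; ext s
  by_cases hs : s ∈ Ioi (0:ℝ)
  · by_cases h0 : m s = 0
    · simp [indicator, hF s h0]
    · obtain ⟨k, hk⟩ := ENNReal.exists_mem_Ico_zpow h0 (hfin s hs) (y := 2) (by norm_num) (by norm_num)
      have : s ∈ ⋃ k, dyS m k := mem_iUnion.2 ⟨k, hs, hk⟩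
      rw [indicator_of_mem hs, indicator_of_mem this]
  · have : s ∉ ⋃ k, dyS m k := by
      intro h; obtain ⟨k, hk⟩ := mem_iUnion.1 h; exact hs hk.1
    rw [indicator_of_notMem hs, indicator_of_notMem this]

lemma dyS_norm (p r : ℝ) (hp : 1 ≤ p) (hr : 0 < r) : ∃ C : ℝ≥0∞, C ≠ ∞ ∧
    ∀ m : ℝ → ℝ≥0∞, Measurable m → (∀ s, 0 < s → m s ≠ ∞) → (∃ S : ℝ, ∀ s, S ≤ s → m s = 0) →
    ∑' k, (volume (dyS m k) * ((2:ℝ≥0∞) ^ k) ^ (1 / r)) ^ p ≤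
      C * ∫⁻ s in Ioi (0:ℝ), m s ^ (p / r) * ENNReal.ofReal (s ^ (p - 1)) := by
  obtain ⟨c, hc, H⟩ := weight_lower (volume : Measure ℝ) (fun s => |s|) (by fun_prop) 2 1 (p - 1)
    (by norm_num) (by norm_num) (by linarith) (by
      intro R hR
      have : {x : ℝ | |x| < R} = Ioo (-R) R := by ext x; simp [abs_lt]
      rw [this, Real.volume_Ioo, Real.rpow_one]
      apply le_of_eq; congr 1; ring)
  refine ⟨(ENNReal.ofReal c)⁻¹, ENNReal.inv_ne_top.2 (by simpa using hc), ?_⟩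
  rintro m hm hfin ⟨S, hS⟩
  have hpr : 0 < p / r := by positivity
  rw [lintegral_dyS hm hfin _ (fun s hs => by rw [hs, ENNReal.zero_rpow_of_pos hpr, zero_mul])]
  rw [← ENNReal.tsum_mul_left]
  refine ENNReal.tsum_le_tsum fun k => ?_
  have hkfin : volume (dyS m k) ≠ ∞ := by
    have : dyS m k ⊆ Ioo 0 S := by
      rintro s ⟨h1, h2⟩
      refine ⟨h1, ?_⟩
      by_contra h
      have h3 := h2.1
      rw [hS s (not_lt.1 h), nonpos_iff_eq_zero] at h3
      exact (ENNReal.zpow_pos (by norm_num) (by norm_num) k).ne' h3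
    exact ((measure_mono this).trans_lt (by simp)).ne
  have h1 := H _ (dyS_meas hm k) hkfin
  rw [mul_comm (ENNReal.ofReal c)⁻¹, ← div_eq_mul_inv, ENNReal.le_div_iff_mul_le (by left; simpa using hc) (by simp)]
  rw [ENNReal.mul_rpow_of_nonneg _ _ (by linarith), ← ENNReal.rpow_mul]
  have e : 1 + (p - 1) / 1 = p := by ring
  rw [e] at h1
  calc _ = ((2:ℝ≥0∞) ^ k) ^ (1 / r * p) * (ENNReal.ofReal c * volume (dyS m k) ^ p) := by ring
    _ ≤ ((2:ℝ≥0∞) ^ k) ^ (1 / r * p) * ∫⁻ s in dyS m k, ENNReal.ofReal (|s| ^ (p - 1)) := by gcongr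
    _ = ∫⁻ s in dyS m k, ((2:ℝ≥0∞) ^ k) ^ (1 / r * p) * ENNReal.ofReal (|s| ^ (p - 1)) := by
        rw [lintegral_const_mul]
        fun_prop
    _ ≤ _ := by
        refine setLIntegral_mono' (dyS_meas hm k) fun s hs => ?_
        have hs0 : 0 < s := hs.1
        rw [abs_of_pos hs0, show 1 / r * p = p / r by ring]
        gcongr
        exact hs.2.1

lemma lorentz_bilin (p q' r : ℝ) (c : ℝ≥0∞) (hc : c ≠ ∞) (hp : 1 < p) (hq' : 1 ≤ q')
    (h : q' ≤ p / (p - 1)) (hr1 : 1 < r) (hr2 : r < 2) : ∃ C : ℝ≥0∞, C ≠ ∞ ∧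
    ∀ m n : ℝ → ℝ≥0∞, Measurable m → (∀ s, 0 < s → m s ≠ ∞) → (∃ S : ℝ, ∀ s, S ≤ s → m s = 0) →
    Measurable n → (∀ s, 0 < s → n s ≠ ∞) → (∃ S : ℝ, ∀ s, S ≤ s → n s = 0) →
    ∫⁻ s in Ioi (0:ℝ), ∫⁻ t in Ioi (0:ℝ), min (m s * n t) (c * (m s * n t) ^ (1 / 2 : ℝ)) ≤
     C * ((∫⁻ s in Ioi (0:ℝ), m s ^ (p / r) * ENNReal.ofReal (s ^ (p - 1))) ^ (1 / p) *
      (∫⁻ s in Ioi (0:ℝ), n s ^ (q' / r) * ENNReal.ofReal (s ^ (q' - 1))) ^ (1 / q')) := by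
  obtain ⟨C1, hC1, H1⟩ := dyS_norm p r hp.le (by linarith)
  obtain ⟨C2, hC2, H2⟩ := dyS_norm q' r hq' (by linarith)
  have hψ := tsum_psi_lt_top c hc r hr1 hr2
  set ψ : ℤ → ℝ≥0∞ := fun n => min (4 * (2:ℝ≥0∞) ^ n) (c * (4 * (2:ℝ≥0∞) ^ n) ^ (1 / 2 : ℝ))
      * ((2:ℝ≥0∞) ^ n) ^ (-(1 / r)) with hψdef
  refine ⟨(∑' n, ψ n) * (C1 ^ (1 / p) * C2 ^ (1 / q')), ?_, ?_⟩
  · refine ENNReal.mul_ne_top hψ.ne (ENNReal.mul_ne_top ?_ ?_)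
    · exact ENNReal.rpow_ne_top_of_nonneg (by positivity) hC1
    · exact ENNReal.rpow_ne_top_of_nonneg (by positivity) hC2
  intro m n hm hmf hmS hn hnf hnS
  have h2 : (2:ℝ≥0∞) ≠ 0 := by norm_num
  have h2' : (2:ℝ≥0∞) ≠ ∞ := by norm_num
  have hpos : ∀ k : ℤ, (2:ℝ≥0∞) ^ k ≠ 0 := fun k => (ENNReal.zpow_pos h2 h2' k).ne'
  have htop : ∀ k : ℤ, (2:ℝ≥0∞) ^ k ≠ ∞ := fun k => ENNReal.zpow_ne_top h2 h2' k
  have hhalf : (0:ℝ) < 1 / 2 := by norm_num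
  set a : ℤ → ℝ≥0∞ := fun k => volume (dyS m k) * ((2:ℝ≥0∞) ^ k) ^ (1 / r) with ha
  set b : ℤ → ℝ≥0∞ := fun k => volume (dyS n k) * ((2:ℝ≥0∞) ^ k) ^ (1 / r) with hb
  have step : ∫⁻ s in Ioi (0:ℝ), ∫⁻ t in Ioi (0:ℝ), min (m s * n t) (c * (m s * n t) ^ (1 / 2 : ℝ))
      ≤ ∑' k, ∑' j, ψ (k + j) * (a k * b j) := by
    rw [lintegral_dyS hm hmf _ (fun s hs => by simp [hs])]
    refine ENNReal.tsum_le_tsum fun k => ?_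
    have inner : ∀ s ∈ dyS m k, ∫⁻ t in Ioi (0:ℝ), min (m s * n t) (c * (m s * n t) ^ (1 / 2 : ℝ))
        ≤ ∑' j, min (4 * (2:ℝ≥0∞) ^ (k + j)) (c * (4 * (2:ℝ≥0∞) ^ (k + j)) ^ (1 / 2 : ℝ))
          * volume (dyS n j) := by
      intro s hs
      rw [lintegral_dyS hn hnf _ (fun t ht => by simp [ht])]
      refine ENNReal.tsum_le_tsum fun j => ?_
      rw [← setLIntegral_const]
      refine setLIntegral_mono' (dyS_meas hn j) fun t ht => ?_
      have hle : m s * n t ≤ 4 * (2:ℝ≥0∞) ^ (k + j) := by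
        calc m s * n t ≤ 2 ^ (k + 1) * 2 ^ (j + 1) := by
              gcongr
              · exact hs.2.2.le
              · exact ht.2.2.le
          _ = _ := by
              rw [← ENNReal.zpow_add h2 h2', show k + 1 + (j + 1) = 2 + (k + j) by ring,
                ENNReal.zpow_add h2 h2']
              norm_num
      gcongr
    refine (setLIntegral_mono' (dyS_meas hm k) inner).trans ?_
    rw [setLIntegral_const, ← ENNReal.tsum_mul_right]
    refine ENNReal.tsum_le_tsum fun j => le_of_eq ?_
    simp only [hψdef, ha, hb]
    have e : ((2:ℝ≥0∞) ^ (k + j)) ^ (-(1 / r)) * (((2:ℝ≥0∞) ^ k) ^ (1 / r) * ((2:ℝ≥0∞) ^ j) ^ (1 / r)) = 1 := by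
      rw [← ENNReal.mul_rpow_of_nonneg _ _ (by positivity), ← ENNReal.zpow_add h2 h2',
        ← ENNReal.rpow_add _ _ (hpos _) (htop _)]
      simp
    calc _ = min (4 * (2:ℝ≥0∞) ^ (k + j)) (c * (4 * (2:ℝ≥0∞) ^ (k + j)) ^ (1 / 2 : ℝ)) * volume (dyS n j) * volume (dyS m k) * 1 := by ring
      _ = _ := by rw [← e]; ring
  refine step.trans ((discrete_young a b ψ p q' hp (by linarith) h).trans ?_)
  rw [mul_assoc (∑' n, ψ n)]
  refine mul_le_mul_right ?_ _
  calc _ ≤ (C1 * ∫⁻ s in Ioi (0:ℝ), m s ^ (p / r) * ENNReal.ofReal (s ^ (p - 1))) ^ (1 / p) *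
      (C2 * ∫⁻ s in Ioi (0:ℝ), n s ^ (q' / r) * ENNReal.ofReal (s ^ (q' - 1))) ^ (1 / q') := by
        gcongr
        · exact H1 m hm hmf hmS
        · exact H2 n hn hnf hnS
    _ = _ := by
        rw [ENNReal.mul_rpow_of_nonneg _ _ (by positivity), ENNReal.mul_rpow_of_nonneg _ _ (by positivity)]
        ring

lemma lintegral_comp_smul' {N : ℕ} (F : EuclideanSpace ℝ (Fin N) → ℝ≥0∞) (c : ℝ) (hc : 0 < c) :
    ∫⁻ x, F (c • x) = ENNReal.ofReal ((c ^ N)⁻¹) * ∫⁻ x, F x := by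
  have h1 := Measure.map_addHaar_smul (volume : Measure (EuclideanSpace ℝ (Fin N))) hc.ne'
  let e : EuclideanSpace ℝ (Fin N) ≃ᵐ EuclideanSpace ℝ (Fin N) :=
    (Homeomorph.smulOfNeZero c hc.ne').toMeasurableEquiv
  have h2 := lintegral_map_equiv (μ := (volume : Measure (EuclideanSpace ℝ (Fin N)))) F e
  have h3 : Measure.map (⇑e) (volume : Measure (EuclideanSpace ℝ (Fin N))) =
    ENNReal.ofReal ((c ^ N)⁻¹) • volume := by
    have : ⇑e = fun x => c • x := rfl
    rw [this]
    have h4 : (fun x : EuclideanSpace ℝ (Fin N) => c • x) = (c • · ) := rfl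
    rw [h4, h1]
    simp [abs_of_pos hc]
  rw [h3, lintegral_smul_measure] at h2
  rw [← smul_eq_mul, h2]
  rfl

open FourierTransform in
lemma FT_eq {N : ℕ} (f : EuclideanSpace ℝ (Fin N) → ℂ) (ξ : EuclideanSpace ℝ (Fin N)) :
    FT f ξ = 𝓕 f ((2 * Real.pi)⁻¹ • ξ) := by
  rw [FT, Real.fourier_eq']
  congr 1; ext x
  rw [smul_eq_mul, mul_comm, inner_smul_right, real_inner_comm]
  congr 2
  push_cast
  have : (Real.pi : ℂ) ≠ 0 := by exact_mod_cast Real.pi_ne_zero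
  field_simp

open FourierTransform SchwartzMap in
lemma plancherel_aux {N : ℕ} (f : EuclideanSpace ℝ (Fin N) → ℂ) (h1 : Integrable f)
    (h2 : MemLp f 2) : eLpNorm (𝓕 f) 2 volume = eLpNorm f 2 volume := by
  have hcont : Continuous (𝓕 f) := by
    exact VectorFourier.fourierIntegral_continuous Real.continuous_fourierChar
      (innerSL ℝ).continuous₂ h1
  have key : ∀ᵐ x, (𝓕 (h2.toLp f) : Lp (α := EuclideanSpace ℝ (Fin N)) ℂ 2 volume) x = 𝓕 f x := by
    apply ae_eq_of_integral_contDiff_smul_eq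
    · exact (Lp.memLp _).locallyIntegrable (by norm_num)
    · exact hcont.locallyIntegrable
    · intro g hg hgs
      have hg' : ContDiff ℝ (⊤ : ℕ∞) (fun x => (g x : ℂ)) := Complex.ofRealCLM.contDiff.comp hg
      have hgs' : HasCompactSupport (fun x => (g x : ℂ)) :=
        hgs.comp_left (g := fun t : ℝ => (t : ℂ)) (by simp)
      let G : 𝓢(EuclideanSpace ℝ (Fin N), ℂ) := hgs'.toSchwartzMap hg'
      have hG : ∀ x, G x = (g x : ℂ) := fun x => rfl
      have e1 := congrArg (fun T => T G) (Lp.fourier_toTemperedDistribution_eq (h2.toLp f))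
      simp only [TemperedDistribution.fourier_apply, Lp.toTemperedDistribution_apply] at e1
      have e2 : ∫ x, g x • (𝓕 (h2.toLp f) : Lp (α := EuclideanSpace ℝ (Fin N)) ℂ 2 volume) x
          = ∫ x, (𝓕 G) x • (h2.toLp f) x := by
        rw [e1]
        congr 1
      rw [e2]
      have e3 : ∫ x, (𝓕 G) x • (h2.toLp f) x = ∫ x, f x • 𝓕 (fun x => (g x : ℂ)) x := by
        apply integral_congr_ae
        filter_upwards [h2.coeFn_toLp] with x hx
        rw [hx, smul_eq_mul, smul_eq_mul, mul_comm, SchwartzMap.fourier_coe]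
        rfl
      rw [e3]
      have := VectorFourier.integral_fourierIntegral_smul_eq_flip (L := innerₗ (EuclideanSpace ℝ (Fin N)))
        (μ := volume) (ν := volume) (f := f) (g := fun x => (g x : ℂ)) Real.continuous_fourierChar
        continuous_inner h1 (hg'.continuous.integrable_of_hasCompactSupport hgs')
      have e4 : ∫ x, g x • 𝓕 f x = ∫ x, 𝓕 f x • (g x : ℂ) := by
        congr 1; ext x; rw [smul_eq_mul, mul_comm]; simp
      rw [e4]
      simp only [flip_innerₗ] at this
      exact this.symm
  rw [← eLpNorm_congr_ae key, ← Lp.enorm_def, ← eLpNorm_congr_ae h2.coeFn_toLp, ← Lp.enorm_def,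
    ← ofReal_norm, ← ofReal_norm, Lp.norm_fourier_eq]

lemma sq_eLpNorm {N : ℕ} (f : EuclideanSpace ℝ (Fin N) → ℂ) :
    eLpNorm f 2 volume = (∫⁻ x, ‖f x‖ₑ ^ (2:ℝ)) ^ (1 / 2 : ℝ) := by
  rw [eLpNorm_eq_lintegral_rpow_enorm_toReal (by norm_num) (by norm_num)]
  simp

lemma FT_plancherel {N : ℕ} (f : EuclideanSpace ℝ (Fin N) → ℂ) (h1 : Integrable f)
    (h2 : MemLp f 2) : ∫⁻ ξ, ‖FT f ξ‖ₑ ^ (2:ℝ) =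
      ENNReal.ofReal ((2 * Real.pi) ^ N) * ∫⁻ x, ‖f x‖ₑ ^ (2:ℝ) := by
  simp_rw [FT_eq]
  rw [lintegral_comp_smul' (fun ξ => ‖FourierTransform.fourier f ξ‖ₑ ^ (2:ℝ)) _ (by positivity)]
  have := plancherel_aux f h1 h2
  rw [sq_eLpNorm, sq_eLpNorm] at this
  rw [ENNReal.rpow_left_injective (by norm_num : (1 / 2 : ℝ) ≠ 0) this]
  congr 2
  rw [inv_pow, inv_inv]

lemma FT_continuous {N : ℕ} (f : EuclideanSpace ℝ (Fin N) → ℂ) (h1 : Integrable f) :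
    Continuous (FT f) := by
  have hcont : Continuous (FourierTransform.fourier f : EuclideanSpace ℝ (Fin N) → ℂ) := by
    exact VectorFourier.fourierIntegral_continuous Real.continuous_fourierChar
      (innerSL ℝ).continuous₂ h1
  have : FT f = fun ξ => FourierTransform.fourier f ((2 * Real.pi)⁻¹ • ξ) := funext (FT_eq f)
  rw [this]
  fun_prop

lemma norm_FT_kernel {N : ℕ} (x ξ : EuclideanSpace ℝ (Fin N)) :
    ‖Complex.exp (-(Complex.I * ((inner ℝ ξ x : ℝ) : ℂ)))‖ = 1 := by
  rw [← Complex.norm_exp_ofReal_mul_I (-(inner ℝ ξ x : ℝ))]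
  congr 2; push_cast; ring

lemma FT_le {N : ℕ} (f : EuclideanSpace ℝ (Fin N) → ℂ) (ξ : EuclideanSpace ℝ (Fin N)) :
    ‖FT f ξ‖ₑ ≤ ∫⁻ x, ‖f x‖ₑ := by
  refine (enorm_integral_le_lintegral_enorm _).trans (le_of_eq ?_)
  congr 1; ext x
  rw [← ofReal_norm, norm_mul, norm_FT_kernel, mul_one, ofReal_norm]

lemma FT_flip {N : ℕ} (f g : EuclideanSpace ℝ (Fin N) → ℂ) (hf : Integrable f) (hg : Integrable g) :
    ∫ ξ, FT f ξ * g ξ = ∫ x, f x * FT g x := by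
  have hintg : Integrable (Function.uncurry fun ξ x =>
      f x * Complex.exp (-(Complex.I * ((inner ℝ ξ x : ℝ) : ℂ))) * g ξ)
      ((volume : Measure (EuclideanSpace ℝ (Fin N))).prod volume) := by
    have h := hg.mul_prod hf
    refine h.mono ?_ ?_
    · have hcont : Continuous fun z : EuclideanSpace ℝ (Fin N) × EuclideanSpace ℝ (Fin N) =>
        Complex.exp (-(Complex.I * ((inner ℝ z.1 z.2 : ℝ) : ℂ))) := by fun_prop
      have := (hf.1.comp_snd (μ := (volume : Measure (EuclideanSpace ℝ (Fin N))))).mul hcont.aestronglyMeasurable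
      exact this.mul hg.1.comp_fst
    · refine Filter.Eventually.of_forall fun z => le_of_eq ?_
      simp only [Function.uncurry, norm_mul, norm_FT_kernel]
      ring
  calc ∫ ξ, FT f ξ * g ξ = ∫ ξ, ∫ x, f x * Complex.exp (-(Complex.I * ((inner ℝ ξ x : ℝ) : ℂ))) * g ξ := by
        congr 1; ext ξ; rw [FT, integral_mul_const]
    _ = ∫ x, ∫ ξ, f x * Complex.exp (-(Complex.I * ((inner ℝ ξ x : ℝ) : ℂ))) * g ξ :=
        integral_integral_swap hintg
    _ = _ := by
        congr 1; ext x
        rw [FT, ← integral_const_mul]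
        congr 1; ext ξ
        rw [real_inner_comm]; ring

/-- basic bilinear bounds -/
lemma bilin_bound {N : ℕ} (u v : EuclideanSpace ℝ (Fin N) → ℂ) (A B : Set (EuclideanSpace ℝ (Fin N)))
    (hA : MeasurableSet A) (hB : MeasurableSet B) (hAf : volume A ≠ ∞)
    (hu : Measurable u) (hv : Measurable v) (huA : ∀ x, ‖u x‖ₑ ≤ A.indicator 1 x)
    (hvB : ∀ x, ‖v x‖ₑ ≤ B.indicator 1 x) :
    ‖∫ ξ, FT u ξ * v ξ‖ₑ ≤ min (volume A * volume B)
      (ENNReal.ofReal ((2 * Real.pi) ^ N) ^ (1 / 2 : ℝ) * (volume A * volume B) ^ (1 / 2 : ℝ)) := by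
  have hu1 : ∫⁻ x, ‖u x‖ₑ ≤ volume A := by
    rw [← lintegral_indicator_one hA]; exact lintegral_mono huA
  have hv1 : ∫⁻ x, ‖v x‖ₑ ≤ volume B := by
    rw [← lintegral_indicator_one hB]; exact lintegral_mono hvB
  have sq : ∀ (C : Set (EuclideanSpace ℝ (Fin N))) x, (C.indicator 1 x : ℝ≥0∞) ^ (2:ℝ) = C.indicator 1 x := by
    intro C x
    by_cases h : x ∈ C <;> simp [h]
  have hu2 : ∫⁻ x, ‖u x‖ₑ ^ (2:ℝ) ≤ volume A := by
    rw [← lintegral_indicator_one hA]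
    refine lintegral_mono fun x => ?_
    rw [← sq A x]
    exact ENNReal.rpow_le_rpow (huA x) (by norm_num)
  have hv2 : ∫⁻ x, ‖v x‖ₑ ^ (2:ℝ) ≤ volume B := by
    rw [← lintegral_indicator_one hB]
    refine lintegral_mono fun x => ?_
    rw [← sq B x]
    exact ENNReal.rpow_le_rpow (hvB x) (by norm_num)
  have hui : Integrable u := ⟨hu.aestronglyMeasurable, hu1.trans_lt hAf.lt_top⟩
  have hum : MemLp u 2 := ⟨hu.aestronglyMeasurable, by
    rw [sq_eLpNorm]
    exact ENNReal.rpow_lt_top_of_nonneg (by norm_num) (hu2.trans_lt hAf.lt_top).ne⟩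
  have h0 : ‖∫ ξ, FT u ξ * v ξ‖ₑ ≤ ∫⁻ ξ, ‖FT u ξ‖ₑ * ‖v ξ‖ₑ := by
    refine (enorm_integral_le_lintegral_enorm _).trans (le_of_eq ?_)
    simp_rw [enorm_mul]
  refine h0.trans (le_min ?_ ?_)
  · calc ∫⁻ ξ, ‖FT u ξ‖ₑ * ‖v ξ‖ₑ ≤ ∫⁻ ξ, volume A * ‖v ξ‖ₑ :=
        lintegral_mono fun ξ => mul_le_mul_left ((FT_le u ξ).trans hu1) _
      _ = volume A * ∫⁻ ξ, ‖v ξ‖ₑ := lintegral_const_mul _ hv.enorm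
      _ ≤ _ := by gcongr
  · have := ENNReal.lintegral_mul_le_Lp_mul_Lq (volume : Measure (EuclideanSpace ℝ (Fin N)))
      (Real.HolderConjugate.two_two) (f := fun ξ => ‖FT u ξ‖ₑ) (g := fun ξ => ‖v ξ‖ₑ)
      (FT_continuous u hui).measurable.enorm.aemeasurable hv.enorm.aemeasurable
    refine this.trans ?_
    rw [FT_plancherel u hui hum, ← ENNReal.mul_rpow_of_nonneg _ _ (by norm_num),
      ← ENNReal.mul_rpow_of_nonneg _ _ (by norm_num), ← mul_assoc]
    gcongr

lemma lorentz_le_weighted (N : ℕ) (hN : 1 ≤ N) (p a : ℝ) (hp : 0 < p) (ha : 0 ≤ a) :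
    ∃ C : ℝ≥0∞, C ≠ ∞ ∧ ∀ f : EuclideanSpace ℝ (Fin N) → ℂ, Measurable f →
      (∀ s : ℝ, 0 < s → volume {x | s < ‖f x‖} ≠ ∞) →
      ∫⁻ s in Ioi (0:ℝ), volume {x | s < ‖f x‖} ^ (1 + a / N) * ENNReal.ofReal (s ^ (p - 1)) ≤
        C * ∫⁻ x, ‖f x‖ₑ ^ p * ENNReal.ofReal (‖x‖ ^ a) := by
  have hNpos : (0:ℝ) < N := by exact_mod_cast hN
  have hball0 : 0 < volume (Metric.ball (0 : EuclideanSpace ℝ (Fin N)) 1) :=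
    Metric.measure_ball_pos _ _ one_pos
  have hballfin : volume (Metric.ball (0 : EuclideanSpace ℝ (Fin N)) 1) ≠ ∞ := measure_ball_lt_top.ne
  obtain ⟨c, hc, H⟩ := weight_lower (volume : Measure (EuclideanSpace ℝ (Fin N))) (fun x => ‖x‖)
    (by fun_prop) (volume (Metric.ball (0 : EuclideanSpace ℝ (Fin N)) 1)).toReal N a
    (ENNReal.toReal_pos hball0.ne' hballfin) hNpos ha (by
      intro R hR
      have : {x : EuclideanSpace ℝ (Fin N) | ‖x‖ < R} = Metric.ball 0 R := by ext x; simp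
      rw [this, Measure.addHaar_ball_of_pos _ _ hR, ENNReal.ofReal_mul (by positivity),
        ENNReal.ofReal_toReal hballfin, mul_comm]
      simp)
  refine ⟨(ENNReal.ofReal (c * p))⁻¹, ENNReal.inv_ne_top.2 (by simpa using by positivity), ?_⟩
  intro f hf hfin
  set w : EuclideanSpace ℝ (Fin N) → ℝ≥0∞ := fun x => ENNReal.ofReal (‖x‖ ^ a) with hw
  have hwm : Measurable w := by fun_prop
  have h1 := lintegral_rpow_eq_lintegral_meas_lt_mul (volume.withDensity w) (f := fun x => ‖f x‖)
    (Filter.Eventually.of_forall fun x => norm_nonneg _) hf.norm.aemeasurable hp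
  rw [lintegral_withDensity_eq_lintegral_mul _ hwm (by fun_prop)] at h1
  have h2 : ∫⁻ x, ‖f x‖ₑ ^ p * ENNReal.ofReal (‖x‖ ^ a) =
      ∫⁻ x, (w * fun x => ENNReal.ofReal (‖f x‖ ^ p)) x := by
    congr 1; ext x
    simp only [Pi.mul_apply, hw]
    rw [mul_comm, ← ENNReal.ofReal_rpow_of_nonneg (norm_nonneg _) hp.le, ofReal_norm]
  rw [h2, h1, mul_comm (ENNReal.ofReal (c * p))⁻¹, ← div_eq_mul_inv,
    ENNReal.le_div_iff_mul_le (by left; simpa using by positivity) (by simp), mul_comm c p,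
    ENNReal.ofReal_mul hp.le, mul_comm, mul_assoc]
  gcongr
  have hmeas : ∀ s : ℝ, MeasurableSet {x | s < ‖f x‖} := fun s => measurableSet_lt measurable_const hf.norm
  rw [← lintegral_const_mul' _ _ ENNReal.ofReal_ne_top]
  refine setLIntegral_mono' measurableSet_Ioi fun s hs => ?_
  rw [← mul_assoc]
  gcongr
  rw [withDensity_apply _ (hmeas s)]
  exact H _ (hmeas s) (hfin s hs)

lemma pitt_bilin (N : ℕ) (hN : 1 ≤ N) (p q' r κ σ : ℝ) (hp : 1 < p) (hq' : 1 ≤ q')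
    (h : q' ≤ p / (p - 1)) (hr1 : 1 < r) (hr2 : r < 2) (hκ : 0 ≤ κ) (hσ : 0 ≤ σ)
    (h1 : p / r = 1 + p * κ / N) (h2 : q' / r = 1 + q' * σ / N) :
    ∃ C : ℝ≥0∞, C ≠ ∞ ∧ ∀ f g : EuclideanSpace ℝ (Fin N) → ℂ, Measurable f → Measurable g →
      ∀ (M : ℝ) (K : Set (EuclideanSpace ℝ (Fin N))), volume K ≠ ∞ → MeasurableSet K →
      (∀ x, ‖f x‖ ≤ M) → (∀ x, ‖g x‖ ≤ M) → (∀ x, x ∉ K → f x = 0) → (∀ x, x ∉ K → g x = 0) →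
      ‖∫ ξ, FT f ξ * g ξ‖ₑ ≤ C * ((∫⁻ x, ‖f x‖ₑ ^ p * ENNReal.ofReal (‖x‖ ^ (p * κ))) ^ (1 / p) *
        (∫⁻ x, ‖g x‖ₑ ^ q' * ENNReal.ofReal (‖x‖ ^ (q' * σ))) ^ (1 / q')) := by
  have hp0 : 0 < p := by linarith
  have hq0 : 0 < q' := by linarith
  obtain ⟨C1, hC1, H1⟩ := lorentz_le_weighted N hN p (p * κ) hp0 (by positivity)
  obtain ⟨C2, hC2, H2⟩ := lorentz_le_weighted N hN q' (q' * σ) hq0 (by positivity)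
  obtain ⟨C3, hC3, H3⟩ := lorentz_bilin p q' r (ENNReal.ofReal ((2 * Real.pi) ^ N) ^ (1 / 2 : ℝ))
    (ENNReal.rpow_ne_top_of_nonneg (by norm_num) (by simp)) hp hq' h hr1 hr2
  refine ⟨C3 * (C1 ^ (1 / p) * C2 ^ (1 / q')), ?_, ?_⟩
  · refine ENNReal.mul_ne_top hC3 (ENNReal.mul_ne_top ?_ ?_)
    · exact ENNReal.rpow_ne_top_of_nonneg (by positivity) hC1
    · exact ENNReal.rpow_ne_top_of_nonneg (by positivity) hC2
  intro f g hf hg M K hK hKm hfM hgM hfK hgK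
  have hKi : ∀ u : EuclideanSpace ℝ (Fin N) → ℂ, Measurable u → ∀ M : ℝ, (∀ x, ‖u x‖ ≤ M) →
      (∀ x, x ∉ K → u x = 0) → Integrable u := by
    intro u hu M huM huK
    have : IntegrableOn u K := Measure.integrableOn_of_bounded hK hu.aestronglyMeasurable (M := M)
      (Filter.Eventually.of_forall fun x => huM x)
    rw [← integrable_indicator_iff hKm] at this
    have hu' : u = K.indicator u := by
     ext x
     by_cases hx : x ∈ K
     · simp [hx]
     · simp [hx, huK x hx]
    rw [hu']; exact this
  have hsub : ∀ u : EuclideanSpace ℝ (Fin N) → ℂ, (∀ x, x ∉ K → u x = 0) → ∀ s : ℝ, 0 < s →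
      volume {x | s < ‖u x‖} ≠ ∞ := by
    intro u huK s hs
    refine ((measure_mono ?_).trans_lt hK.lt_top).ne
    intro x hx
    by_contra hxK
    have hx' : s < ‖u x‖ := hx
    rw [huK x hxK, norm_zero] at hx'
    linarith
  have hvan : ∀ u : EuclideanSpace ℝ (Fin N) → ℂ, (∀ x, ‖u x‖ ≤ M) →
      ∃ S : ℝ, ∀ s, S ≤ s → volume {x | s < ‖u x‖} = 0 := by
    intro u huM
    refine ⟨M, fun s hs => ?_⟩
    have : {x | s < ‖u x‖} = ∅ := by
      ext x; simp; exact (huM x).trans hs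
    simp [this]
  have hanti : ∀ u : EuclideanSpace ℝ (Fin N) → ℂ, Measurable fun s : ℝ => volume {x | s < ‖u x‖} := by
    intro u
    apply Antitone.measurable
    intro s t hst
    exact measure_mono fun x hx => lt_of_le_of_lt hst hx
  have hmeas : ∀ u : EuclideanSpace ℝ (Fin N) → ℂ, Measurable u → ∀ s : ℝ, MeasurableSet {x | s < ‖u x‖} :=
    fun u hu s => measurableSet_lt measurable_const hu.norm
  have hpiece : ∀ u : EuclideanSpace ℝ (Fin N) → ℂ, ∀ s : ℝ, ∀ x,
      ‖{x | s < ‖u x‖}.indicator (fun x => u x / ‖u x‖) x‖ₑ ≤ {x | s < ‖u x‖}.indicator 1 x := by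
    intro u s x
    by_cases hx : s < ‖u x‖
    · simp only [indicator, mem_ofPred_eq, hx, if_true, Pi.one_apply]
      rw [← ofReal_norm]
      rw [ENNReal.ofReal_le_one, norm_div]
      simp only [Complex.norm_real, norm_norm]
      exact div_self_le_one _
    · simp [indicator, hx]
  have hpiece1 : ∀ u : EuclideanSpace ℝ (Fin N) → ℂ, ∀ s : ℝ, ∀ x,
      ‖{x | s < ‖u x‖}.indicator (fun x => u x / ‖u x‖) x‖ ≤ 1 := by
    intro u s x
    by_cases hx : s < ‖u x‖
    · simp only [indicator, mem_ofPred_eq, hx, if_true]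
      rw [norm_div]
      simp only [Complex.norm_real, norm_norm]
      exact div_self_le_one _
    · simp [indicator, hx]
  have hpm : ∀ u : EuclideanSpace ℝ (Fin N) → ℂ, Measurable u → ∀ s : ℝ,
      Measurable ({x | s < ‖u x‖}.indicator (fun x => u x / ‖u x‖)) := by
    intro u hu s
    exact Measurable.indicator (by fun_prop) (hmeas u hu s)
  have hpi : ∀ u : EuclideanSpace ℝ (Fin N) → ℂ, Measurable u → (∀ x, x ∉ K → u x = 0) → ∀ s : ℝ,
      Integrable ({x | s < ‖u x‖}.indicator (fun x => u x / ‖u x‖)) := by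
    intro u hu huK s
    refine hKi _ (hpm u hu s) 1 (hpiece1 u s) fun x hx => ?_
    simp [indicator, huK x hx]
  have hbdd : ∀ u : EuclideanSpace ℝ (Fin N) → ℂ, Integrable u → ∀ ξ, ‖FT u ξ‖ ≤ (∫⁻ x, ‖u x‖ₑ).toReal := by
    intro u hu ξ
    have := ENNReal.toReal_mono hu.2.ne (FT_le u ξ)
    simpa using this
  have hfi := hKi f hf M hfM hfK
  have hgi := hKi g hg M hgM hgK
  calc ‖∫ ξ, FT f ξ * g ξ‖ₑ = ‖∫ x, f x * FT g x‖ₑ := by rw [FT_flip f g hfi hgi]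
    _ ≤ ∫⁻ s in Ioi (0 : ℝ),
      ‖∫ x, {x | s < ‖f x‖}.indicator (fun x => f x / ‖f x‖) x * FT g x‖ₑ :=
        layer_bound volume f (FT g) hfi hf (FT_continuous g hgi).aestronglyMeasurable _ (hbdd g hgi)
    _ ≤ ∫⁻ s in Ioi (0 : ℝ), ∫⁻ t in Ioi (0 : ℝ),
        min (volume {x | s < ‖f x‖} * volume {x | t < ‖g x‖})
          (ENNReal.ofReal ((2 * Real.pi) ^ N) ^ (1 / 2 : ℝ) *
            (volume {x | s < ‖f x‖} * volume {x | t < ‖g x‖}) ^ (1 / 2 : ℝ)) := by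
        refine setLIntegral_mono' measurableSet_Ioi fun s hs => ?_
        rw [← FT_flip _ g (hpi f hf hfK s) hgi]
        simp_rw [mul_comm _ (g _)]
        refine (layer_bound volume g _ hgi hg (FT_continuous _ (hpi f hf hfK s)).aestronglyMeasurable _
          (hbdd _ (hpi f hf hfK s))).trans ?_
        refine setLIntegral_mono' measurableSet_Ioi fun t ht => ?_
        simp_rw [mul_comm _ (FT _ _)]
        exact bilin_bound _ _ _ _ (hmeas f hf s) (hmeas g hg t) (hsub f hfK s hs) (hpm f hf s)
          (hpm g hg t) (hpiece f s) (hpiece g t)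
    _ ≤ C3 * ((∫⁻ s in Ioi (0:ℝ), volume {x | s < ‖f x‖} ^ (p / r) * ENNReal.ofReal (s ^ (p - 1))) ^ (1 / p) *
      (∫⁻ s in Ioi (0:ℝ), volume {x | s < ‖g x‖} ^ (q' / r) * ENNReal.ofReal (s ^ (q' - 1))) ^ (1 / q')) :=
        H3 _ _ (hanti f) (hsub f hfK) (hvan f hfM) (hanti g) (hsub g hgK) (hvan g hgM)
    _ ≤ C3 * ((C1 * ∫⁻ x, ‖f x‖ₑ ^ p * ENNReal.ofReal (‖x‖ ^ (p * κ))) ^ (1 / p) *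
        (C2 * ∫⁻ x, ‖g x‖ₑ ^ q' * ENNReal.ofReal (‖x‖ ^ (q' * σ))) ^ (1 / q')) := by
        rw [h1, h2]
        gcongr
        · exact H1 f hf (hsub f hfK)
        · exact H2 g hg (hsub g hgK)
    _ = _ := by
        rw [ENNReal.mul_rpow_of_nonneg _ _ (by positivity), ENNReal.mul_rpow_of_nonneg _ _ (by positivity)]
        ring

lemma pitt_annulus (N : ℕ) (p q κ σ : ℝ) (hq : 1 < q) (hσ : 0 ≤ σ)
    (C : ℝ≥0∞)
    (H : ∀ f g : EuclideanSpace ℝ (Fin N) → ℂ, Measurable f → Measurable g →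
      ∀ (M : ℝ) (K : Set (EuclideanSpace ℝ (Fin N))), volume K ≠ ∞ → MeasurableSet K →
      (∀ x, ‖f x‖ ≤ M) → (∀ x, ‖g x‖ ≤ M) → (∀ x, x ∉ K → f x = 0) → (∀ x, x ∉ K → g x = 0) →
      ‖∫ ξ, FT f ξ * g ξ‖ₑ ≤ C * ((∫⁻ x, ‖f x‖ₑ ^ p * ENNReal.ofReal (‖x‖ ^ (p * κ))) ^ (1 / p) *
        (∫⁻ x, ‖g x‖ₑ ^ (q / (q - 1)) * ENNReal.ofReal (‖x‖ ^ (q / (q - 1) * σ))) ^ (1 / (q / (q - 1)))))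
    (f : EuclideanSpace ℝ (Fin N) → ℂ) (hf : Continuous f) (hfs : HasCompactSupport f) (δ : ℝ)
    (hδ : 0 < δ) (D : ℝ) :
    ∫⁻ ξ in {ξ : EuclideanSpace ℝ (Fin N) | δ ≤ ‖ξ‖ ∧ ‖ξ‖ ≤ D},
      ‖FT f ξ‖ₑ ^ q * ENNReal.ofReal (‖ξ‖ ^ (-(q * σ))) ≤
    (C * (∫⁻ x, ‖f x‖ₑ ^ p * ENNReal.ofReal (‖x‖ ^ (p * κ))) ^ (1 / p)) ^ q := by
  set A : Set (EuclideanSpace ℝ (Fin N)) := {ξ | δ ≤ ‖ξ‖ ∧ ‖ξ‖ ≤ D} with hA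
  set R := (∫⁻ x, ‖f x‖ₑ ^ p * ENNReal.ofReal (‖x‖ ^ (p * κ))) ^ (1 / p) with hR
  set I := ∫⁻ ξ in A, ‖FT f ξ‖ₑ ^ q * ENNReal.ofReal (‖ξ‖ ^ (-(q * σ))) with hI
  have hq0 : 0 < q := by linarith
  have hAm : MeasurableSet A :=
    (measurableSet_le measurable_const measurable_norm).inter (measurableSet_le measurable_norm measurable_const)
  have hAf : volume A ≠ ∞ := by
    have : A ⊆ Metric.closedBall 0 D := fun x hx => by simpa using hx.2
    exact ((measure_mono this).trans_lt measure_closedBall_lt_top).ne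
  have hfi : Integrable f := hf.integrable_of_hasCompactSupport hfs
  have hFc := FT_continuous f hfi
  obtain ⟨M1, hM1⟩ : ∃ M1 : ℝ, ∀ x, ‖f x‖ ≤ M1 := hfs.exists_bound_of_continuous hf
  obtain ⟨M2, hM2⟩ : ∃ M2 : ℝ, ∀ x, ‖FT f x‖ ≤ M2 := by
    refine ⟨(∫⁻ x, ‖f x‖ₑ).toReal, fun ξ => ?_⟩
    have := ENNReal.toReal_mono hfi.2.ne (FT_le f ξ)
    simpa using this
  have hM20 : 0 ≤ M2 := (norm_nonneg _).trans (hM2 0)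
  set G : EuclideanSpace ℝ (Fin N) → ℂ := fun ξ => (starRingEnd ℂ) (FT f ξ) *
    ((‖FT f ξ‖ ^ (q - 2) * ‖ξ‖ ^ (-(q * σ)) : ℝ) : ℂ) with hG
  have hGm : Measurable G := by
    apply Measurable.mul
    · exact (Complex.continuous_conj.comp hFc).measurable
    · exact Complex.measurable_ofReal.comp
        ((hFc.measurable.norm.pow_const _).mul (measurable_norm.pow_const _))
  have hGn : ∀ ξ, ‖G ξ‖ = ‖FT f ξ‖ ^ (q - 1) * ‖ξ‖ ^ (-(q * σ)) := by
    intro ξ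
    simp only [hG, norm_mul, RCLike.norm_conj, Complex.norm_real, Real.norm_eq_abs]
    rw [abs_of_nonneg (by positivity), abs_of_nonneg (by positivity), ← mul_assoc]
    congr 1
    rcases eq_or_ne (FT f ξ) 0 with h | h
    · rw [h, norm_zero, zero_mul, Real.zero_rpow (by linarith)]
    · rw [show q - 1 = 1 + (q - 2) by ring, Real.rpow_add (by positivity), Real.rpow_one]
  have hFG : ∀ ξ, FT f ξ * G ξ = ((‖FT f ξ‖ ^ q * ‖ξ‖ ^ (-(q * σ)) : ℝ) : ℂ) := by
    intro ξ
    simp only [hG]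
    rw [← mul_assoc, Complex.mul_conj, Complex.normSq_eq_norm_sq, ← Complex.ofReal_mul, ← mul_assoc]
    congr 2
    rcases eq_or_ne (FT f ξ) 0 with h | h
    · rw [h, norm_zero, Real.zero_rpow (by linarith : q ≠ 0)]; simp
    · rw [← Real.rpow_natCast, ← Real.rpow_add (by positivity)]; congr 1; push_cast; ring
  set g := A.indicator G with hg
  have hbound : ∀ ξ ∈ A, ‖ξ‖ ^ (-(q * σ)) ≤ δ ^ (-(q * σ)) := by
    intro ξ hξ
    apply Real.rpow_le_rpow_of_nonpos hδ hξ.1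
    have : 0 ≤ q * σ := by positivity
    linarith
  have hgM : ∀ ξ, ‖g ξ‖ ≤ M2 ^ (q - 1) * δ ^ (-(q * σ)) := by
    intro ξ
    by_cases hξ : ξ ∈ A
    · rw [hg, indicator_of_mem hξ, hGn]
      have := hbound ξ hξ
      gcongr
      exact hM2 ξ
    · rw [hg, indicator_of_notMem hξ, norm_zero]; positivity
  have hmain := H f g hf.measurable (hGm.indicator hAm) (max M1 (M2 ^ (q - 1) * δ ^ (-(q * σ))))
    (tsupport f ∪ A)
    (by
      have := hfs.isCompact.measure_lt_top (μ := volume)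
      exact ((measure_union_le _ _).trans_lt (ENNReal.add_lt_top.2 ⟨this, hAf.lt_top⟩)).ne)
    ((isClosed_tsupport f).measurableSet.union hAm)
    (fun x => (hM1 x).trans (le_max_left _ _)) (fun x => (hgM x).trans (le_max_right _ _))
    (fun x hx => by
      have : x ∉ tsupport f := fun h => hx (Or.inl h)
      exact image_eq_zero_of_notMem_tsupport this)
    (fun x hx => by
      have : x ∉ A := fun h => hx (Or.inr h)
      rw [hg, indicator_of_notMem this])
  have hIeq : ∀ ξ, ‖FT f ξ‖ₑ ^ q * ENNReal.ofReal (‖ξ‖ ^ (-(q * σ))) =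
      ENNReal.ofReal (‖FT f ξ‖ ^ q * ‖ξ‖ ^ (-(q * σ))) := by
    intro ξ
    rw [ENNReal.ofReal_mul (by positivity), ← ENNReal.ofReal_rpow_of_nonneg (norm_nonneg _) hq0.le, ofReal_norm]
  have hIfin : I ≠ ∞ := by
    have : I ≤ ∫⁻ ξ in A, ENNReal.ofReal (M2 ^ q * δ ^ (-(q * σ))) := by
      refine setLIntegral_mono' hAm fun ξ hξ => ?_
      rw [hIeq]
      apply ENNReal.ofReal_le_ofReal
      have := hbound ξ hξ
      gcongr
      exact hM2 ξ
    refine (this.trans_lt ?_).ne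
    rw [setLIntegral_const]
    exact ENNReal.mul_lt_top ENNReal.ofReal_lt_top hAf.lt_top
  have hlhs : ‖∫ ξ, FT f ξ * g ξ‖ₑ = I := by
    have e1 : ∫ ξ, FT f ξ * g ξ = ((∫ ξ in A, ‖FT f ξ‖ ^ q * ‖ξ‖ ^ (-(q * σ)) : ℝ) : ℂ) := by
      rw [← integral_complex_ofReal, ← integral_indicator hAm]
      congr 1; ext ξ
      by_cases hξ : ξ ∈ A
      · rw [hg, indicator_of_mem hξ, indicator_of_mem hξ, hFG]
      · rw [hg, indicator_of_notMem hξ, indicator_of_notMem hξ, mul_zero]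
    have e2 : I = ENNReal.ofReal (∫ ξ in A, ‖FT f ξ‖ ^ q * ‖ξ‖ ^ (-(q * σ)) : ℝ) := by
      have hmm : Measurable (fun ξ => ‖FT f ξ‖ ^ q * ‖ξ‖ ^ (-(q * σ))) :=
        (hFc.measurable.norm.pow_const _).mul (measurable_norm.pow_const _)
      have hnn : ∀ ξ, 0 ≤ (fun ξ => ‖FT f ξ‖ ^ q * ‖ξ‖ ^ (-(q * σ))) ξ := fun ξ => by positivity
      rw [integral_eq_lintegral_of_nonneg_ae (f := fun ξ => ‖FT f ξ‖ ^ q * ‖ξ‖ ^ (-(q * σ)))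
        (Filter.Eventually.of_forall hnn) hmm.aestronglyMeasurable]
      simp_rw [← hIeq]
      rw [ENNReal.ofReal_toReal hIfin]
    rw [e1, e2, ← ofReal_norm, Complex.norm_real, Real.norm_of_nonneg]
    exact integral_nonneg fun ξ => by positivity
  have hq1 : 0 < q - 1 := by linarith
  have hrhs : ∫⁻ x, ‖g x‖ₑ ^ (q / (q - 1)) * ENNReal.ofReal (‖x‖ ^ (q / (q - 1) * σ)) = I := by
    rw [hI, ← lintegral_indicator hAm]
    congr 1; ext ξ
    by_cases hξ : ξ ∈ A
    · rw [hg, indicator_of_mem hξ, indicator_of_mem hξ, ← ofReal_norm, hGn, hIeq]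
      have hξ0 : 0 < ‖ξ‖ := hδ.trans_le hξ.1
      rw [ENNReal.ofReal_rpow_of_nonneg (by positivity) (by positivity),
        ← ENNReal.ofReal_mul (by positivity), Real.mul_rpow (by positivity) (by positivity),
        ← Real.rpow_mul (by positivity), ← Real.rpow_mul (by positivity), mul_assoc,
        ← Real.rpow_add hξ0]
      congr 3
      · field_simp
      · field_simp; ring
    · rw [hg, indicator_of_notMem hξ, indicator_of_notMem hξ, enorm_zero,
        ENNReal.zero_rpow_of_pos (by positivity), zero_mul]
  rw [hlhs, hrhs, ← mul_assoc] at hmain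
  rcases eq_or_ne I 0 with h0 | h0
  · rw [h0]; exact zero_le
  have e : 1 / (q / (q - 1)) = 1 - 1 / q := by field_simp
  rw [e, ENNReal.rpow_sub _ _ h0 hIfin, ENNReal.rpow_one] at hmain
  set J := I ^ (1 / q) with hJ
  have hJ0 : J ≠ 0 := by simp [hJ, h0, hIfin]
  have hJt : J ≠ ∞ := ENNReal.rpow_ne_top_of_nonneg (by positivity) hIfin
  have : I * J ≤ (C * R) * I := by
    calc I * J ≤ (C * R * (I / J)) * J := by gcongr
      _ = C * R * I := by rw [mul_assoc, ENNReal.div_mul_cancel hJ0 hJt]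
  rw [mul_comm] at this
  have h3 : J ≤ C * R := (ENNReal.mul_le_mul_iff_left h0 hIfin).1 this
  calc I = J ^ q := by rw [hJ, ← ENNReal.rpow_mul, one_div_mul_cancel hq0.ne', ENNReal.rpow_one]
    _ ≤ _ := by gcongr

lemma annuli_sup (N : ℕ) (hN : 1 ≤ N) (F : EuclideanSpace ℝ (Fin N) → ℝ≥0∞) (B : ℝ≥0∞)
    (h : ∀ δ D : ℝ, 0 < δ → ∫⁻ ξ in {ξ : EuclideanSpace ℝ (Fin N) | δ ≤ ‖ξ‖ ∧ ‖ξ‖ ≤ D}, F ξ ≤ B) :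
    ∫⁻ ξ, F ξ ≤ B := by
  have : Nonempty (Fin N) := ⟨⟨0, hN⟩⟩
  set A : ℕ → Set (EuclideanSpace ℝ (Fin N)) := fun n => {ξ | 1 / ((n:ℝ) + 1) ≤ ‖ξ‖ ∧ ‖ξ‖ ≤ n} with hA
  have hmono : Monotone A := by
    intro m n hmn x hx
    have : (m:ℝ) ≤ n := by exact_mod_cast hmn
    refine ⟨le_trans ?_ hx.1, hx.2.trans this⟩
    gcongr
  have hU : (⋃ n, A n) = {0}ᶜ := by
    ext x
    simp only [mem_iUnion, mem_compl_iff, mem_singleton_iff]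
    constructor
    · rintro ⟨n, hn⟩ rfl
      have h1 := hn.1
      rw [norm_zero] at h1
      have : (0:ℝ) < 1 / ((n:ℝ) + 1) := by positivity
      linarith
    · intro hx
      have hx' : 0 < ‖x‖ := norm_pos_iff.2 hx
      obtain ⟨n1, hn1⟩ := exists_nat_one_div_lt hx'
      obtain ⟨n2, hn2⟩ := exists_nat_ge ‖x‖
      refine ⟨max n1 n2, ?_, ?_⟩
      · refine le_trans ?_ hn1.le
        gcongr
        exact le_max_left _ _
      · exact hn2.trans (by exact_mod_cast le_max_right _ _)
  have h0 : ∫⁻ ξ, F ξ = ∫⁻ ξ in ⋃ n, A n, F ξ := by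
    rw [hU, ← setLIntegral_univ F]
    apply setLIntegral_congr
    exact (ae_eq_univ.2 (by simp)).symm
  rw [h0, setLIntegral_iUnion_of_directed _ hmono.directed_le]
  exact iSup_le fun n => h _ _ (by positivity)

lemma pitt_sufficient (N : ℕ) (hN : 1 ≤ N) (p q : ℝ) (hp : 1 < p) (hpq : p ≤ q) (σ κ : ℝ)
    (hs : κ - σ = N * (1 - 1/p - 1/q)) (hσ : 0 ≤ σ) (hκ : 0 ≤ κ) (hκ' : κ < N * (1 - 1 / p)) :
    ∃ C : ℝ≥0∞, C ≠ ∞ ∧ ∀ f : EuclideanSpace ℝ (Fin N) → ℂ,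
      Continuous f → HasCompactSupport f →
      (∫⁻ ξ, ‖FT f ξ‖ₑ ^ q * ENNReal.ofReal (‖ξ‖ ^ (-(q * σ)))) ^ (1/q)
        ≤ C * (∫⁻ x, ‖f x‖ₑ ^ p * ENNReal.ofReal (‖x‖ ^ (p * κ))) ^ (1/p) := by
  have hNpos : (0:ℝ) < N := by exact_mod_cast hN
  have hp0 : 0 < p := by linarith
  have hq1 : 1 < q := by linarith
  have hq0 : 0 < q := by linarith
  obtain ⟨t, ht⟩ : ∃ t, t = 1 / p + κ / N := ⟨_, rfl⟩
  have ht' : t = 1 - 1 / q + σ / N := by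
    have : κ = σ + N * (1 - 1/p - 1/q) := by linarith
    rw [ht, this]; field_simp; ring
  have ht1 : t < 1 := by
    have : κ / N < 1 - 1 / p := by rw [div_lt_iff₀ hNpos]; linarith
    linarith
  have hpq' : 1 / q ≤ 1 / p := one_div_le_one_div_of_le hp0 hpq
  have hκN : 0 ≤ κ / N := by positivity
  have hσN : 0 ≤ σ / N := by positivity
  have ht2 : 1 / 2 ≤ t := by linarith
  rcases ht2.eq_or_lt with h2 | h2
  · -- Plancherel case
    have k0 : κ / N = 0 := by linarith
    have s0 : σ / N = 0 := by linarith
    have hk : κ = 0 := by simpa [hNpos.ne'] using k0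
    have hsg : σ = 0 := by simpa [hNpos.ne'] using s0
    have hp2 : p = 2 := by
      have : 1 / p = 1 / 2 := by linarith
      field_simp at this; linarith
    have hq2 : q = 2 := by
      have : 1 / q = 1 / 2 := by linarith
      field_simp at this; linarith
    subst hp2 hq2 hk hsg
    refine ⟨ENNReal.ofReal ((2 * Real.pi) ^ N) ^ (1 / 2 : ℝ),
      ENNReal.rpow_ne_top_of_nonneg (by norm_num) (by simp), fun f hf hfs => ?_⟩
    simp only [mul_zero, neg_zero, Real.rpow_zero, ENNReal.ofReal_one, mul_one]
    rw [FT_plancherel f (hf.integrable_of_hasCompactSupport hfs) (hf.memLp_of_hasCompactSupport hfs),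
      ENNReal.mul_rpow_of_nonneg _ _ (by norm_num)]
  · have ht0 : 0 < t := by linarith
    obtain ⟨C, hC, H⟩ := pitt_bilin N hN p (q / (q - 1)) (1 / t) κ σ hp
      (by rw [le_div_iff₀ (by linarith)]; linarith)
      (by rw [div_le_div_iff₀ (by linarith) (by linarith)]; nlinarith)
      (by rw [lt_div_iff₀ ht0]; linarith) (by rw [div_lt_iff₀ ht0]; linarith) hκ hσ
      (by rw [ht]; field_simp) (by
        have : q - 1 ≠ 0 := by linarith
        rw [ht']; field_simp)
    refine ⟨C, hC, fun f hf hfs => ?_⟩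
    rw [one_div q, ENNReal.rpow_inv_le_iff hq0]
    exact annuli_sup N hN _ _ fun δ D hδ => pitt_annulus N p q κ σ hq1 hσ C H f hf hfs δ hδ D

lemma pow_bdd (e : ℝ) (l K : ℝ≥0∞) (hl : l ≠ 0) (hK : K ≠ ∞)
    (h : ∀ t : ℝ, 0 < t → ENNReal.ofReal (t ^ e) * l ≤ K) : e = 0 := by
  by_contra he
  have hlt : l ≠ ∞ := by
    intro hl'
    have := h 1 one_pos
    rw [hl', Real.one_rpow, ENNReal.ofReal_one, one_mul] at this
    exact hK (top_le_iff.1 this)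
  have hl0 : 0 < l.toReal := ENNReal.toReal_pos hl hlt
  have hpos : 0 < K.toReal / l.toReal + 1 := by positivity
  have h1 := h ((K.toReal / l.toReal + 1) ^ (1 / e)) (by positivity)
  rw [← Real.rpow_mul hpos.le, one_div_mul_cancel he, Real.rpow_one] at h1
  have h2 := ENNReal.toReal_mono hK h1
  rw [ENNReal.toReal_mul, ENNReal.toReal_ofReal hpos.le, add_mul, div_mul_cancel₀ _ hl0.ne'] at h2
  linarith

lemma FT_scale {N : ℕ} (f : EuclideanSpace ℝ (Fin N) → ℂ) (c : ℝ) (hc : 0 < c)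
    (ξ : EuclideanSpace ℝ (Fin N)) :
    FT (fun x => f (c • x)) ξ = (((c ^ N)⁻¹ : ℝ) : ℂ) * FT f (c⁻¹ • ξ) := by
  have h := Measure.integral_comp_smul_of_nonneg (volume : Measure (EuclideanSpace ℝ (Fin N)))
    (fun x => f x * Complex.exp (-(Complex.I * ((inner ℝ (c⁻¹ • ξ) x : ℝ) : ℂ)))) c (hR := hc.le)
  rw [finrank_euclideanSpace_fin] at h
  unfold FT
  rw [← Complex.real_smul, ← h]
  congr 1; ext x
  rw [inner_smul_left, inner_smul_right]
  simp [hc.ne']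

lemma FT_translate {N : ℕ} (f : EuclideanSpace ℝ (Fin N) → ℂ)
    (a ξ : EuclideanSpace ℝ (Fin N)) :
    ‖FT (fun x => f (x - a)) ξ‖ₑ = ‖FT f ξ‖ₑ := by
  have h := integral_sub_right_eq_self (μ := (volume : Measure (EuclideanSpace ℝ (Fin N))))
    (fun x => f x * Complex.exp (-(Complex.I * ((inner ℝ ξ (x + a) : ℝ) : ℂ)))) a
  simp only [sub_add_cancel] at h
  have : FT (fun x => f (x - a)) ξ = FT f ξ * Complex.exp (((-(inner ℝ ξ a) : ℝ) : ℂ) * Complex.I) := by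
    unfold FT
    rw [h, ← integral_mul_const]
    congr 1; ext x
    rw [mul_assoc, ← Complex.exp_add, inner_add_right]
    congr 2
    push_cast; ring
  rw [this, enorm_mul, ← ofReal_norm (Complex.exp _), Complex.norm_exp_ofReal_mul_I]
  simp

lemma FT_modulate {N : ℕ} (f : EuclideanSpace ℝ (Fin N) → ℂ)
    (a ξ : EuclideanSpace ℝ (Fin N)) :
    FT (fun x => f x * Complex.exp (((inner ℝ a x : ℝ) : ℂ) * Complex.I)) ξ = FT f (ξ - a) := by
  unfold FT
  congr 1; ext x
  rw [mul_assoc, ← Complex.exp_add, inner_sub_left]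
  congr 2
  push_cast; ring

lemma exists_unit (N : ℕ) (hN : 1 ≤ N) : ∃ e : EuclideanSpace ℝ (Fin N), ‖e‖ = 1 :=
  ⟨EuclideanSpace.single ⟨0, hN⟩ 1, by simp⟩

lemma exists_test (N : ℕ) (hN : 1 ≤ N) : ∃ f : EuclideanSpace ℝ (Fin N) → ℂ,
    ContDiff ℝ (⊤ : ℕ∞) f ∧ HasCompactSupport f ∧ (∀ x, f x ≠ 0 → 1 ≤ ‖x‖ ∧ ‖x‖ ≤ 3) ∧
    (∀ x, ‖f x‖ ≤ 1) ∧ FT f 0 ≠ 0 := by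
  obtain ⟨e, he⟩ := exists_unit N hN
  let b : ContDiffBump ((2:ℝ) • e) := ⟨1/2, 1, by norm_num, by norm_num⟩
  refine ⟨fun x => (b x : ℂ), Complex.ofRealCLM.contDiff.comp b.contDiff,
    b.hasCompactSupport.comp_left (g := fun t : ℝ => (t : ℂ)) (by simp), ?_, ?_, ?_⟩
  · intro x hx
    have hx' : x ∈ Function.support b := by
      simpa using hx
    rw [b.support_eq] at hx'
    have h1 : ‖x - (2:ℝ) • e‖ < 1 := mem_ball_iff_norm.1 hx'
    have h2 : ‖(2:ℝ) • e‖ = 2 := by rw [norm_smul, he]; norm_num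
    have h3 := norm_sub_norm_le x ((2:ℝ) • e)
    have h4 := norm_sub_norm_le ((2:ℝ) • e) x
    rw [norm_sub_rev] at h4
    constructor <;> linarith
  · intro x
    rw [Complex.norm_real, Real.norm_of_nonneg b.nonneg]
    exact b.le_one
  · have : FT (fun x => (b x : ℂ)) 0 = ((∫ x, b x : ℝ) : ℂ) := by
      unfold FT
      rw [← integral_complex_ofReal]
      simp
    rw [this]
    exact_mod_cast (b.integral_pos (μ := volume)).ne'

lemma rhs_bound {N : ℕ} (f : EuclideanSpace ℝ (Fin N) → ℂ) (p κ M r : ℝ) (hp : 0 < p)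
    (x0 : EuclideanSpace ℝ (Fin N)) (h1 : ∀ x, ‖f x‖ ≤ 1)
    (h : ∀ x, f x ≠ 0 → ‖x - x0‖ ≤ r ∧ ‖x‖ ^ (p * κ) ≤ M) :
    ∫⁻ x, ‖f x‖ₑ ^ p * ENNReal.ofReal (‖x‖ ^ (p * κ)) ≤
      ENNReal.ofReal M * volume (Metric.closedBall (0 : EuclideanSpace ℝ (Fin N)) r) := by
  have e : volume (Metric.closedBall (0 : EuclideanSpace ℝ (Fin N)) r) =
      volume (Metric.closedBall x0 r) :=
    (Measure.addHaar_closedBall_center volume x0 r).symm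
  rw [e, ← lintegral_indicator_const measurableSet_closedBall]
  refine lintegral_mono fun x => ?_
  by_cases hx : f x = 0
  · simp [hx, hp]
  · obtain ⟨ha, hb⟩ := h x hx
    have hm : x ∈ Metric.closedBall x0 r := mem_closedBall_iff_norm.2 ha
    simp only [indicator_of_mem hm]
    have : ‖f x‖ₑ ^ p ≤ 1 := by
      apply ENNReal.rpow_le_one _ hp.le
      rw [← ofReal_norm]
      exact ENNReal.ofReal_le_one.2 (h1 x)
    calc ‖f x‖ₑ ^ p * ENNReal.ofReal (‖x‖ ^ (p * κ)) ≤ 1 * ENNReal.ofReal M := by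
          gcongr
      _ = _ := one_mul _

lemma weight_div {N : ℕ} (hN : 1 ≤ N) (s δ : ℝ) (hδ : 0 < δ) (hs : N ≤ s) :
    ∫⁻ ξ in Metric.ball (0 : EuclideanSpace ℝ (Fin N)) δ, ENNReal.ofReal (‖ξ‖ ^ (-s)) = ∞ := by
  by_contra hfin
  obtain ⟨e, he⟩ := exists_unit N hN
  set w : EuclideanSpace ℝ (Fin N) → ℝ≥0∞ := fun ξ => ENNReal.ofReal (‖ξ‖ ^ (-s)) with hw
  set B := Metric.ball (0 : EuclideanSpace ℝ (Fin N)) δ with hB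
  set B2 := Metric.ball (0 : EuclideanSpace ℝ (Fin N)) (δ / 2) with hB2
  set B3 := Metric.ball ((3 * δ / 4) • e) (δ / 8) with hB3
  have hs0 : 0 ≤ s := (Nat.cast_nonneg N).trans hs
  have h1 := lintegral_comp_smul' (B.indicator w) 2 two_pos
  have h2 : ∀ x, B.indicator w ((2:ℝ) • x) = ENNReal.ofReal (2 ^ (-s)) * B2.indicator w x := by
    intro x
    have hiff : (2:ℝ) • x ∈ B ↔ x ∈ B2 := by
      rw [hB, hB2, mem_ball_zero_iff, mem_ball_zero_iff, norm_smul, Real.norm_of_nonneg two_pos.le]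
      constructor <;> intro h <;> linarith
    by_cases hx : x ∈ B2
    · rw [indicator_of_mem hx, indicator_of_mem (hiff.2 hx), hw]
      simp only
      rw [norm_smul, Real.norm_of_nonneg two_pos.le,
        Real.mul_rpow two_pos.le (norm_nonneg _), ENNReal.ofReal_mul (by positivity)]
    · rw [indicator_of_notMem hx, indicator_of_notMem (fun h => hx (hiff.1 h)), mul_zero]
  simp_rw [h2] at h1
  rw [lintegral_const_mul' _ _ ENNReal.ofReal_ne_top, lintegral_indicator measurableSet_ball,
    lintegral_indicator measurableSet_ball] at h1
  have h3 : ∫⁻ ξ in B, w ξ ≤ ∫⁻ ξ in B2, w ξ := by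
    have hle : ENNReal.ofReal (2 ^ (-s)) ≤ ENNReal.ofReal ((2 ^ N)⁻¹) := by
      apply ENNReal.ofReal_le_ofReal
      rw [Real.rpow_neg two_pos.le, ← Real.rpow_natCast]
      gcongr
      norm_num
    have hpos : ENNReal.ofReal ((2 ^ N)⁻¹) ≠ 0 := by
      rw [Ne, ENNReal.ofReal_eq_zero, not_le]; positivity
    have h5 : ENNReal.ofReal ((2 ^ N)⁻¹) * ∫⁻ ξ in B, w ξ ≤
        ENNReal.ofReal ((2 ^ N)⁻¹) * ∫⁻ ξ in B2, w ξ := by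
      rw [← h1]; gcongr
    exact (ENNReal.mul_le_mul_iff_right hpos ENNReal.ofReal_ne_top).1 h5
  have hn : ‖(3 * δ / 4) • e‖ = 3 * δ / 4 := by
    rw [norm_smul, he, Real.norm_of_nonneg (by positivity), mul_one]
  have hB3' : ∀ x ∈ B3, δ / 2 < ‖x‖ ∧ ‖x‖ < δ := by
    intro x hx
    have h1 : ‖x - (3 * δ / 4) • e‖ < δ / 8 := mem_ball_iff_norm.1 hx
    have h3 := norm_sub_norm_le x ((3 * δ / 4) • e)
    have h4 := norm_sub_norm_le ((3 * δ / 4) • e) x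
    rw [norm_sub_rev] at h4
    constructor <;> linarith
  have hdisj : Disjoint B2 B3 := by
    rw [Set.disjoint_left]
    intro x hx hx3
    have := (hB3' x hx3).1
    have := mem_ball_zero_iff.1 hx
    linarith
  have hsub : B2 ∪ B3 ⊆ B := by
    rintro x (hx | hx)
    · have := mem_ball_zero_iff.1 hx
      exact mem_ball_zero_iff.2 (by linarith)
    · exact mem_ball_zero_iff.2 (hB3' x hx).2
  have h6 : (∫⁻ ξ in B2, w ξ) + (∫⁻ ξ in B3, w ξ) ≤ ∫⁻ ξ in B2, w ξ := by
    rw [← lintegral_union measurableSet_ball hdisj]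
    exact (lintegral_mono_set hsub).trans h3
  have h2fin : ∫⁻ ξ in B2, w ξ ≠ ∞ := by
    refine ne_top_of_le_ne_top hfin (lintegral_mono_set ?_)
    exact subset_union_left.trans hsub
  have h7 : ∫⁻ ξ in B3, w ξ = 0 := by
    by_contra h0
    exact absurd h6 (not_le.2 (ENNReal.lt_add_right h2fin h0))
  have h8 : ENNReal.ofReal (δ ^ (-s)) * volume B3 ≤ ∫⁻ ξ in B3, w ξ := by
    rw [← setLIntegral_const]
    refine setLIntegral_mono' measurableSet_ball fun x hx => ?_
    apply ENNReal.ofReal_le_ofReal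
    have := hB3' x hx
    exact Real.rpow_le_rpow_of_nonpos (by linarith) this.2.le (by linarith)
  rw [h7, nonpos_iff_eq_zero, mul_eq_zero] at h8
  rcases h8 with h8 | h8
  · rw [ENNReal.ofReal_eq_zero] at h8
    have : 0 < δ ^ (-s) := by positivity
    linarith
  · exact (Metric.measure_ball_pos volume ((3 * δ / 4) • e) (by positivity : 0 < δ / 8)).ne' h8

lemma pitt_necessary (N : ℕ) (hN : 1 ≤ N) (p q : ℝ) (hp : 1 < p) (hpq : p ≤ q) (σ κ : ℝ)
    (C : ℝ≥0∞) (hC : C ≠ ∞)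
    (H : ∀ f : EuclideanSpace ℝ (Fin N) → ℂ,
      ContDiff ℝ (⊤ : ℕ∞) f → HasCompactSupport f →
      (∫⁻ ξ, ‖FT f ξ‖ₑ ^ q * ENNReal.ofReal (‖ξ‖ ^ (-(q * σ)))) ^ (1/q)
        ≤ C * (∫⁻ x, ‖f x‖ₑ ^ p * ENNReal.ofReal (‖x‖ ^ (p * κ))) ^ (1/p)) :
    κ - σ = N * (1 - 1/p - 1/q) ∧ 0 ≤ σ ∧ σ < N / q ∧ 0 ≤ κ := by
  have hp0 : 0 < p := by linarith
  have hq0 : 0 < q := by linarith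
  obtain ⟨e, he⟩ := exists_unit N hN
  obtain ⟨f, hf, hfs, hsupp, hf1, hf0⟩ := exists_test N hN
  have hFc : Continuous (FT f) := FT_continuous f (hf.continuous.integrable_of_hasCompactSupport hfs)
  obtain ⟨c, hc0, hct, δ, hδ, hδ1, hlow⟩ : ∃ c : ℝ≥0∞, c ≠ 0 ∧ c ≠ ∞ ∧ ∃ δ : ℝ, 0 < δ ∧ δ ≤ 1 ∧
      ∀ ξ, ‖ξ‖ < δ → c ≤ ‖FT f ξ‖ₑ := by
    have hpos : 0 < ‖FT f 0‖ := norm_pos_iff.2 hf0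
    have hev := (hFc.norm.tendsto (0 : EuclideanSpace ℝ (Fin N))).eventually
      (lt_mem_nhds (half_lt_self hpos))
    obtain ⟨δ, hδ, h⟩ := Metric.eventually_nhds_iff.1 hev
    refine ⟨ENNReal.ofReal (‖FT f 0‖ / 2), ?_, ENNReal.ofReal_ne_top, min δ 1, by positivity,
      min_le_right _ _, ?_⟩
    · rw [Ne, ENNReal.ofReal_eq_zero, not_le]; positivity
    · intro ξ hξ
      rw [← ofReal_norm]
      apply ENNReal.ofReal_le_ofReal
      apply le_of_lt
      apply h
      rw [dist_zero_right]
      exact hξ.trans_le (min_le_left _ _)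
  set w : EuclideanSpace ℝ (Fin N) → ℝ≥0∞ := fun ξ => ENNReal.ofReal (‖ξ‖ ^ (-(q * σ))) with hw
  set L := ∫⁻ ξ, ‖FT f ξ‖ₑ ^ q * ENNReal.ofReal (‖ξ‖ ^ (-(q * σ))) with hL
  set R := ∫⁻ x, ‖f x‖ₑ ^ p * ENNReal.ofReal (‖x‖ ^ (p * κ)) with hR
  have hcq0 : c ^ q ≠ 0 := by simp [hc0, hct]
  have hcqt : c ^ q ≠ ∞ := ENNReal.rpow_ne_top_of_nonneg hq0.le hct
  have hRfin : R ≠ ∞ := by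
    refine ne_top_of_le_ne_top ?_ (rhs_bound f p κ (3 ^ |p * κ|) 3 hp0 0 hf1 ?_)
    · exact ENNReal.mul_ne_top ENNReal.ofReal_ne_top measure_closedBall_lt_top.ne
    · intro x hx
      obtain ⟨h1, h3⟩ := hsupp x hx
      refine ⟨by simpa using h3, ?_⟩
      calc ‖x‖ ^ (p * κ) ≤ ‖x‖ ^ |p * κ| := Real.rpow_le_rpow_of_exponent_le h1 (le_abs_self _)
        _ ≤ 3 ^ |p * κ| := by gcongr
  have hRp : C * R ^ (1 / p) ≠ ∞ :=
    ENNReal.mul_ne_top hC (ENNReal.rpow_ne_top_of_nonneg (by positivity) hRfin)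
  have hLlow : c ^ q * ∫⁻ ξ in Metric.ball (0 : EuclideanSpace ℝ (Fin N)) δ, w ξ ≤ L := by
    rw [← lintegral_const_mul' _ _ hcqt]
    refine le_trans (setLIntegral_mono' measurableSet_ball fun ξ hξ => ?_)
      (setLIntegral_le_lintegral (Metric.ball (0 : EuclideanSpace ℝ (Fin N)) δ) _)
    have := hlow ξ (mem_ball_zero_iff.1 hξ)
    simp only [hw]
    gcongr
  have hL0 : L ≠ 0 := by
    intro hz
    rw [hz, nonpos_iff_eq_zero, mul_eq_zero] at hLlow
    rcases hLlow with h | h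
    · exact hcq0 h
    have hn : ‖(δ / 2) • e‖ = δ / 2 := by
      rw [norm_smul, he, Real.norm_of_nonneg (by positivity), mul_one]
    have hwm : Measurable w := (measurable_norm.pow_const _).ennreal_ofReal
    rw [setLIntegral_eq_zero_iff measurableSet_ball hwm] at h
    have hz0 : volume (Metric.ball ((δ / 2) • e) (δ / 2)) = 0 := by
      refine measure_mono_null ?_ h
      intro x hx hx'
      have h1 : ‖x - (δ / 2) • e‖ < δ / 2 := mem_ball_iff_norm.1 hx
      have h3 := norm_sub_norm_le x ((δ / 2) • e)
      have h4 := norm_sub_norm_le ((δ / 2) • e) x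
      rw [norm_sub_rev] at h4
      have h5 : 0 < ‖x‖ := by linarith
      have h6 := hx' (mem_ball_zero_iff.2 (by linarith))
      simp only [hw, ENNReal.ofReal_eq_zero] at h6
      have : 0 < ‖x‖ ^ (-(q * σ)) := by positivity
      linarith
    exact (Metric.measure_ball_pos volume ((δ / 2) • e) (by positivity : 0 < δ / 2)).ne' hz0
  have hLfin : L ≠ ∞ := by
    intro hz
    have := H f hf hfs
    rw [← hL, ← hR, hz, ENNReal.top_rpow_of_pos (by positivity), top_le_iff] at this
    exact hRp this
  have hLq0 : L ^ (1 / q) ≠ 0 := by simp [hL0, hLfin]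
  -- (1) scaling
  have S1 : -N - σ + N / q + κ + N / p = 0 := by
    apply pow_bdd _ (L ^ (1 / q)) (C * R ^ (1 / p)) hLq0 hRp
    intro t ht
    have h1 := H (fun x => f (t • x)) (hf.comp (contDiff_const_smul t))
      (hfs.comp_homeomorph (Homeomorph.smulOfNeZero t ht.ne'))
    have e1 : ∫⁻ ξ, ‖FT (fun x => f (t • x)) ξ‖ₑ ^ q * ENNReal.ofReal (‖ξ‖ ^ (-(q * σ))) =
        ENNReal.ofReal (t ^ (-N - σ + N / q)) ^ q * L := by
      have h2 := lintegral_comp_smul' (fun ξ => ‖FT f ξ‖ₑ ^ q * w ξ) t⁻¹ (inv_pos.2 ht)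
      have h3 : ∀ ξ, ‖FT (fun x => f (t • x)) ξ‖ₑ ^ q * ENNReal.ofReal (‖ξ‖ ^ (-(q * σ))) =
          ENNReal.ofReal (t ^ (-(N * q) - q * σ)) * (‖FT f (t⁻¹ • ξ)‖ₑ ^ q * w (t⁻¹ • ξ)) := by
        intro ξ
        rw [FT_scale f t ht, enorm_mul, ENNReal.mul_rpow_of_nonneg _ _ hq0.le, ← ofReal_norm,
          Complex.norm_real, Real.norm_of_nonneg (by positivity),
          ENNReal.ofReal_rpow_of_nonneg (by positivity) hq0.le]
        have e2 : ‖ξ‖ ^ (-(q * σ)) = t ^ (-(q * σ)) * ‖t⁻¹ • ξ‖ ^ (-(q * σ)) := by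
          rw [← Real.mul_rpow ht.le (norm_nonneg _), norm_smul, Real.norm_of_nonneg (by positivity),
            mul_inv_cancel_left₀ ht.ne']
        have e3 : ((t ^ N)⁻¹) ^ q = t ^ (-(N * q)) := by
          rw [← Real.rpow_natCast, ← Real.rpow_neg ht.le, ← Real.rpow_mul ht.le]
          congr 1; ring
        rw [e2, e3, sub_eq_add_neg, Real.rpow_add ht, ENNReal.ofReal_mul (by positivity),
          ENNReal.ofReal_mul (by positivity)]
        simp only [hw]
        ring
      simp_rw [h3]
      rw [lintegral_const_mul' _ _ ENNReal.ofReal_ne_top, h2, ← mul_assoc,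
        ← ENNReal.ofReal_mul (by positivity), ENNReal.ofReal_rpow_of_nonneg (by positivity) hq0.le]
      congr 2
      rw [← Real.rpow_mul ht.le, inv_pow, inv_inv, ← Real.rpow_natCast, ← Real.rpow_add ht]
      congr 1
      field_simp
    have e4 : ∫⁻ x, ‖f (t • x)‖ₑ ^ p * ENNReal.ofReal (‖x‖ ^ (p * κ)) =
        ENNReal.ofReal (t ^ (-κ - N / p)) ^ p * R := by
      have h2 := lintegral_comp_smul' (fun x => ‖f x‖ₑ ^ p * ENNReal.ofReal (‖x‖ ^ (p * κ))) t ht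
      have h3 : ∀ x, ‖f (t • x)‖ₑ ^ p * ENNReal.ofReal (‖x‖ ^ (p * κ)) =
          ENNReal.ofReal (t ^ (-(p * κ))) *
            (‖f (t • x)‖ₑ ^ p * ENNReal.ofReal (‖t • x‖ ^ (p * κ))) := by
        intro x
        have e2 : ‖x‖ ^ (p * κ) = t ^ (-(p * κ)) * ‖t • x‖ ^ (p * κ) := by
          rw [norm_smul, Real.norm_of_nonneg ht.le, Real.mul_rpow ht.le (norm_nonneg _),
            Real.rpow_neg ht.le, inv_mul_cancel_left₀ (by positivity)]
        rw [e2, ENNReal.ofReal_mul (by positivity)]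
        ring
      simp_rw [h3]
      rw [lintegral_const_mul' _ _ ENNReal.ofReal_ne_top, h2, ← mul_assoc,
        ← ENNReal.ofReal_mul (by positivity), ENNReal.ofReal_rpow_of_nonneg (by positivity) hp0.le]
      congr 2
      rw [← Real.rpow_mul ht.le, ← Real.rpow_natCast, ← Real.rpow_neg ht.le, ← Real.rpow_add ht]
      congr 1
      field_simp
      ring
    rw [e1, e4, ENNReal.mul_rpow_of_nonneg _ _ (by positivity),
      ENNReal.mul_rpow_of_nonneg _ _ (by positivity), ← ENNReal.rpow_mul, ← ENNReal.rpow_mul,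
      mul_one_div_cancel hq0.ne', mul_one_div_cancel hp0.ne', ENNReal.rpow_one,
      ENNReal.rpow_one] at h1
    have e5 : t ^ (-N - σ + N / q + κ + N / p) = t ^ (κ + N / p) * t ^ (-N - σ + N / q) := by
      rw [← Real.rpow_add ht]; congr 1; ring
    have e6 : t ^ (κ + N / p) * t ^ (-κ - N / p) = 1 := by
      rw [← Real.rpow_add ht]; ring_nf; exact Real.rpow_zero t
    calc ENNReal.ofReal (t ^ (-N - σ + N / q + κ + N / p)) * L ^ (1 / q)
        = ENNReal.ofReal (t ^ (κ + N / p)) *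
            (ENNReal.ofReal (t ^ (-N - σ + N / q)) * L ^ (1 / q)) := by
          rw [e5, ENNReal.ofReal_mul (by positivity), mul_assoc]
      _ ≤ ENNReal.ofReal (t ^ (κ + N / p)) *
            (C * (ENNReal.ofReal (t ^ (-κ - N / p)) * R ^ (1 / p))) := by gcongr
      _ = ENNReal.ofReal (t ^ (κ + N / p) * t ^ (-κ - N / p)) * (C * R ^ (1 / p)) := by
          rw [ENNReal.ofReal_mul (by positivity)]; ring
      _ = C * R ^ (1 / p) := by rw [e6, ENNReal.ofReal_one, one_mul]
  refine ⟨?_, ?_, ?_, ?_⟩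
  · have : (N:ℝ) * (1 - 1 / p - 1 / q) = N - N / p - N / q := by ring
    rw [this]; linarith
  · by_contra hσ
    push Not at hσ
    have : -σ = 0 := by
      apply pow_bdd _ ((c ^ q * volume (Metric.ball (0 : EuclideanSpace ℝ (Fin N)) δ)) ^ (1 / q))
        (C * R ^ (1 / p)) ?_ hRp
      · intro t ht
        set a : EuclideanSpace ℝ (Fin N) := (t + 1) • e with ha
        have han : ‖a‖ = t + 1 := by
          rw [ha, norm_smul, he, Real.norm_of_nonneg (by positivity), mul_one]
        have h1 := H (fun x => f x * Complex.exp (((inner ℝ a x : ℝ) : ℂ) * Complex.I))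
          (hf.mul ((Complex.ofRealCLM.contDiff.comp (contDiff_const.inner ℝ contDiff_id)).mul
            contDiff_const).cexp) hfs.mul_right
        simp_rw [FT_modulate, enorm_mul, ← ofReal_norm (Complex.exp _),
          Complex.norm_exp_ofReal_mul_I, ENNReal.ofReal_one, mul_one] at h1
        rw [← hR] at h1
        refine le_trans ?_ h1
        have h2 : ENNReal.ofReal (t ^ (-σ)) =
            (ENNReal.ofReal (t ^ (-σ)) ^ q) ^ (1 / q) := by
          rw [← ENNReal.rpow_mul, mul_one_div_cancel hq0.ne', ENNReal.rpow_one]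
        rw [h2, ← ENNReal.mul_rpow_of_nonneg _ _ (by positivity)]
        gcongr
        rw [← Measure.addHaar_ball_center volume a δ, ← mul_assoc, ← setLIntegral_const]
        refine le_trans (setLIntegral_mono' measurableSet_ball fun ξ hξ => ?_)
          (setLIntegral_le_lintegral (Metric.ball a δ) _)
        have h3 : ‖ξ - a‖ < δ := mem_ball_iff_norm.1 hξ
        have h4 := norm_sub_norm_le a ξ
        rw [norm_sub_rev] at h4
        have h5 := hlow _ h3
        rw [mul_comm, ENNReal.ofReal_rpow_of_nonneg (by positivity) hq0.le, ← Real.rpow_mul ht.le]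
        have h6 : t ^ (-σ * q) ≤ ‖ξ‖ ^ (-(q * σ)) := by
          have : -σ * q = -(q * σ) := by ring
          rw [this]
          apply Real.rpow_le_rpow ht.le (by linarith)
          nlinarith
        gcongr
      · have := (Metric.measure_ball_pos volume (0 : EuclideanSpace ℝ (Fin N)) hδ).ne'
        have h' : volume (Metric.ball (0 : EuclideanSpace ℝ (Fin N)) δ) ≠ ∞ := measure_ball_lt_top.ne
        intro h
        rw [ENNReal.rpow_eq_zero_iff_of_pos (by positivity), mul_eq_zero] at h
        exact h.elim hcq0 this
    linarith
  · by_contra hσ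
    push Not at hσ
    have hs : (N:ℝ) ≤ q * σ := by
      rw [div_le_iff₀ hq0] at hσ; linarith
    have := weight_div hN (q * σ) δ hδ hs
    simp only [hw] at hLlow
    rw [this, ENNReal.mul_top hcq0] at hLlow
    exact hLfin (top_le_iff.1 hLlow)
  · by_contra hκ
    push Not at hκ
    set V := volume (Metric.closedBall (0 : EuclideanSpace ℝ (Fin N)) 3) with hV
    have : -κ = 0 := by
      apply pow_bdd _ (L ^ (1 / q)) (C * V ^ (1 / p)) hLq0
      · exact ENNReal.mul_ne_top hC (ENNReal.rpow_ne_top_of_nonneg (by positivity)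
          measure_closedBall_lt_top.ne)
      intro t ht
      set a : EuclideanSpace ℝ (Fin N) := (t + 3) • e with ha
      have han : ‖a‖ = t + 3 := by
        rw [ha, norm_smul, he, Real.norm_of_nonneg (by positivity), mul_one]
      have h1 := H (fun x => f (x - a)) (hf.comp (contDiff_id.sub contDiff_const))
        (hfs.comp_homeomorph (Homeomorph.subRight a))
      simp_rw [FT_translate] at h1
      rw [← hL] at h1
      have h2 := rhs_bound (fun x => f (x - a)) p κ (t ^ (p * κ)) 3 hp0 a (fun x => hf1 _) (by
        intro x hx
        have h3 := (hsupp _ hx).2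
        refine ⟨h3, ?_⟩
        have h4 := norm_sub_norm_le a x
        rw [norm_sub_rev] at h4
        exact Real.rpow_le_rpow_of_nonpos ht (by linarith) (by nlinarith))
      have e6 : t ^ (-κ) * t ^ κ = 1 := by
        rw [← Real.rpow_add ht]; ring_nf; exact Real.rpow_zero t
      calc ENNReal.ofReal (t ^ (-κ)) * L ^ (1 / q)
          ≤ ENNReal.ofReal (t ^ (-κ)) * (C * (ENNReal.ofReal (t ^ (p * κ)) * V) ^ (1 / p)) := by
            gcongr
            refine h1.trans ?_
            gcongr
        _ = ENNReal.ofReal (t ^ (-κ) * t ^ κ) * (C * V ^ (1 / p)) := by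
            rw [ENNReal.mul_rpow_of_nonneg _ _ (by positivity),
              ENNReal.ofReal_rpow_of_nonneg (by positivity) (by positivity), ← Real.rpow_mul ht.le,
              ENNReal.ofReal_mul (by positivity)]
            have : p * κ * (1 / p) = κ := by field_simp
            rw [this]; ring
        _ = C * V ^ (1 / p) := by rw [e6, ENNReal.ofReal_one, one_mul]
    linarith

/-- classical Pitt inequality with power weights on `ℝ^N`:
for `1 < p ≤ q < ∞`, the inequality holds iff
`κ − σ = N(1 − 1/p − 1/q)`, `0 ≤ σ < N/q` and `0 ≤ κ < N/p'`. -/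
theorem stmt17 (N : ℕ) (hN : 1 ≤ N) (p q p' : ℝ) (hp : 1 < p) (hpq : p ≤ q)
    (hp'def : p' = p / (p - 1)) (σ κ : ℝ) :
    (∃ C : ℝ, 0 < C ∧ ∀ f : EuclideanSpace ℝ (Fin N) → ℂ,
      ContDiff ℝ (⊤ : ℕ∞) f → HasCompactSupport f →
      (∫⁻ ξ, (‖FT f ξ‖₊ : ℝ≥0∞) ^ q * ENNReal.ofReal (‖ξ‖ ^ (-(q * σ)))) ^ (1/q)
        ≤ ENNReal.ofReal C *
          (∫⁻ x, (‖f x‖₊ : ℝ≥0∞) ^ p * ENNReal.ofReal (‖x‖ ^ (p * κ))) ^ (1/p))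
    ↔ (κ - σ = N * (1 - 1/p - 1/q) ∧ 0 ≤ σ ∧ σ < N / q ∧ 0 ≤ κ ∧ κ < N / p') := by
  have hp1 : 0 < p - 1 := by linarith
  have hNp : (N:ℝ) / p' = N * (1 - 1 / p) := by
    rw [hp'def]; field_simp
  rw [hNp]
  constructor
  · rintro ⟨C, hC, H⟩
    obtain ⟨h1, h2, h3, h4⟩ := pitt_necessary N hN p q hp hpq σ κ (ENNReal.ofReal C)
      ENNReal.ofReal_ne_top H
    refine ⟨h1, h2, h3, h4, ?_⟩
    have e1 : (N:ℝ) * (1 - 1 / p - 1 / q) = N * (1 - 1 / p) - N / q := by ring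
    linarith
  · rintro ⟨h1, h2, h3, h4, h5⟩
    obtain ⟨C, hC, H⟩ := pitt_sufficient N hN p q hp hpq σ κ h1 h2 h4 h5
    refine ⟨C.toReal + 1, by positivity, fun f hf hfs => ?_⟩
    refine (H f hf.continuous hfs).trans ?_
    have : C ≤ ENNReal.ofReal (C.toReal + 1) := by
      rw [ENNReal.le_ofReal_iff_toReal_le hC (by positivity)]; linarith
    gcongr
    rfl
end

section
/- Let N ≥ 1 be an integer and let u be a positive measurable function on ℝ^N belonging to weak-L¹, i.e. sup_{α>0} α · Leb({ξ ∈ ℝ^N : u(ξ) > α}) < ∞. Then for every 1 < p ≤ 2 there is a constant C_p > 0 (depending only on p, N, and u) such that ( ∫_{ℝ^N} |𝓕f(ξ)|^p u(ξ)^{2−p} dξ )^{1/p} ≤ C_p ( ∫_{ℝ^N} |f(x)|^p dx )^{1/p} for all f ∈ C_c^∞(ℝ^N). -/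
open MeasureTheory Set ENNReal

open scoped FourierTransform SchwartzMap

namespace Paley

variable {N : ℕ}

lemma FT_eq (f : EuclideanSpace ℝ (Fin N) → ℂ) (ξ : EuclideanSpace ℝ (Fin N)) :
    FT f ξ = 𝓕 f ((2 * Real.pi)⁻¹ • ξ) := by
  rw [Real.fourier_eq', FT]
  congr 1
  ext x
  rw [smul_eq_mul, mul_comm, inner_smul_right, real_inner_comm]
  congr 2
  push_cast
  have : (Real.pi : ℂ) ≠ 0 := by exact_mod_cast Real.pi_ne_zero
  field_simp

lemma FT_continuous {f : EuclideanSpace ℝ (Fin N) → ℂ}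
    (hf : ContDiff ℝ (⊤ : ℕ∞) f) (hc : HasCompactSupport f) : Continuous (FT f) := by
  have h : FT f = fun ξ => 𝓕 (hc.toSchwartzMap hf) ((2 * Real.pi)⁻¹ • ξ) := by
    ext ξ
    rw [FT_eq]; rfl
  rw [h]
  exact (𝓕 (hc.toSchwartzMap hf)).continuous.comp (by fun_prop)

lemma plancherel {f : EuclideanSpace ℝ (Fin N) → ℂ}
    (hf : ContDiff ℝ (⊤ : ℕ∞) f) (hc : HasCompactSupport f) :
    ∫⁻ ξ, ENNReal.ofReal (‖FT f ξ‖ ^ 2)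
      = ENNReal.ofReal ((2 * Real.pi) ^ N) * ∫⁻ x, ENNReal.ofReal (‖f x‖ ^ 2) := by
  set S := hc.toSchwartzMap hf with hS
  have h : FT f = fun ξ => 𝓕 S ((2 * Real.pi)⁻¹ • ξ) := by
    ext ξ
    rw [FT_eq]; rfl
  have hi : ∀ S : 𝓢(EuclideanSpace ℝ (Fin N), ℂ), Integrable (fun x => ‖S x‖ ^ 2) := fun S =>
    (S.memLp 2).integrable_norm_pow (by norm_num)
  have hpi : (2 * Real.pi)⁻¹ ≠ 0 := by positivity
  have e1 : ∫ ξ, ‖FT f ξ‖ ^ 2 = (2 * Real.pi) ^ N * ∫ x, ‖f x‖ ^ 2 := by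
    rw [h, Measure.integral_comp_smul volume (fun x => ‖𝓕 S x‖ ^ 2),
      SchwartzMap.integral_norm_sq_fourier]
    simp [abs_of_pos Real.pi_pos]
    rw [← mul_inv, mul_comm Real.pi 2, inv_pow, inv_inv]
    rfl
  have i1 : Integrable (fun ξ => ‖FT f ξ‖ ^ 2) := by
    rw [h]; exact (hi (𝓕 S)).comp_smul hpi
  rw [← ofReal_integral_eq_lintegral_ofReal i1 (ae_of_all _ fun _ => by positivity),
    ← ofReal_integral_eq_lintegral_ofReal (f := fun x => ‖f x‖ ^ 2) (hi S) (ae_of_all _ fun _ => by positivity),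
    ← ENNReal.ofReal_mul (by positivity), e1]

lemma FT_add {g h : EuclideanSpace ℝ (Fin N) → ℂ}
    (hg : Continuous g) (hgc : HasCompactSupport g)
    (hh : Continuous h) (hhc : HasCompactSupport h) (ξ) :
    FT (fun x => g x + h x) ξ = FT g ξ + FT h ξ := by
  unfold FT
  simp_rw [add_mul]
  apply integral_add
  · exact Continuous.integrable_of_hasCompactSupport (by fun_prop) hgc.mul_right
  · exact Continuous.integrable_of_hasCompactSupport (by fun_prop) hhc.mul_right

lemma FT_le (f : EuclideanSpace ℝ (Fin N) → ℂ) (ξ) :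
    ‖FT f ξ‖ ≤ ∫ x, ‖f x‖ := by
  unfold FT
  refine (norm_integral_le_integral_norm _).trans (le_of_eq ?_)
  congr 1
  ext x
  rw [norm_mul, Complex.norm_exp]
  simp

lemma truncate {f : EuclideanSpace ℝ (Fin N) → ℂ}
    (hf : ContDiff ℝ (⊤ : ℕ∞) f) (hc : HasCompactSupport f) {t : ℝ} (ht : 0 < t) :
    ∃ g h : EuclideanSpace ℝ (Fin N) → ℂ,
      ContDiff ℝ (⊤ : ℕ∞) g ∧ HasCompactSupport g ∧
      ContDiff ℝ (⊤ : ℕ∞) h ∧ HasCompactSupport h ∧ (f = fun x => g x + h x) ∧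
      (∀ x, ‖g x‖ ^ 2 ≤ if ‖f x‖ < 2 * t then ‖f x‖ ^ 2 else 0) ∧
      (∀ x, ‖h x‖ ≤ if t < ‖f x‖ then ‖f x‖ else 0) := by
  let φ : ContDiffBump (0 : ℂ) := ⟨t, 2 * t, ht, by linarith⟩
  have h1 : ContDiff ℝ (⊤ : ℕ∞) (fun x => ((φ (f x) : ℝ) : ℂ)) :=
    Complex.ofRealCLM.contDiff.comp (φ.contDiff.comp hf)
  refine ⟨fun x => (φ (f x) : ℂ) * f x, fun x => (1 - (φ (f x) : ℂ)) * f x, h1.mul hf,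
    hc.mul_left, (contDiff_const.sub h1).mul hf, hc.mul_left, ?_, ?_, ?_⟩
  · ext x; ring
  · intro x
    rw [norm_mul, Complex.norm_real, Real.norm_of_nonneg (φ.nonneg (x := f x))]
    split_ifs with hx
    · exact pow_le_pow_left₀ (mul_nonneg (φ.nonneg (x := f x)) (norm_nonneg _))
        (mul_le_of_le_one_left (norm_nonneg _) (φ.le_one (x := f x))) 2
    · rw [φ.zero_of_le_dist (x := f x) (by simpa [φ] using hx)]; simp
  · intro x
    have : ‖(1 - (φ (f x) : ℂ))‖ = 1 - φ (f x) := by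
      rw [← Complex.ofReal_one, ← Complex.ofReal_sub, Complex.norm_real, Real.norm_of_nonneg]
      linarith [φ.le_one (x := f x)]
    rw [norm_mul, this]
    split_ifs with hx
    · exact mul_le_of_le_one_left (norm_nonneg _) (by linarith [φ.nonneg (x := f x)])
    · rw [φ.one_of_mem_closedBall (x := f x) (by simpa [φ] using hx)]; simp

lemma weak_bound {u : EuclideanSpace ℝ (Fin N) → ℝ} (hu : Measurable u) (hu0 : ∀ ξ, 0 < u ξ)
    {A : ℝ} (hA : 0 < A) (huw : ∀ α : ℝ, 0 < α →
      ENNReal.ofReal α * volume {ξ : EuclideanSpace ℝ (Fin N) | α < u ξ} ≤ ENNReal.ofReal A)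
    {s : ℝ} :
    ∫⁻ ξ in {ξ | u ξ ≤ s}, ENNReal.ofReal (u ξ ^ 2) ≤ ENNReal.ofReal (2 * A * s) := by
  have h := lintegral_rpow_eq_lintegral_meas_lt_mul (volume.restrict {ξ | u ξ ≤ s})
    (ae_of_all _ fun ξ => (hu0 ξ).le) hu.aemeasurable (p := 2) (by norm_num)
  simp only [Real.rpow_two] at h
  rw [h]
  have hle : ∫⁻ t in Ioi (0 : ℝ), (volume.restrict {ξ | u ξ ≤ s}) {a | t < u a} *
      ENNReal.ofReal (t ^ ((2 : ℝ) - 1))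
      ≤ ∫⁻ t in Ioi (0 : ℝ), (Ioo 0 s).indicator (fun _ => ENNReal.ofReal A) t := by
    refine setLIntegral_mono' measurableSet_Ioi fun t ht => ?_
    have ht : 0 < t := ht
    norm_num
    by_cases hts : t < s
    · rw [indicator_of_mem (by exact ⟨ht, hts⟩), mul_comm]
      refine le_trans ?_ (huw t ht)
      gcongr
      exact Measure.restrict_le_self
    · have : (volume.restrict {ξ | u ξ ≤ s}) {a | t < u a} = 0 := by
        rw [Measure.restrict_apply (measurableSet_lt measurable_const hu)]
        convert measure_empty (μ := (volume : Measure (EuclideanSpace ℝ (Fin N))))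
        ext ξ
        simp only [mem_inter_iff, mem_ofPred_eq, mem_empty_iff_false, iff_false]
        intro h; linarith [h.1, h.2]
      rw [this]; simp
  have h2 : ∫⁻ t in Ioi (0 : ℝ), (Ioo 0 s).indicator (fun _ => ENNReal.ofReal A) t
      ≤ ENNReal.ofReal A * ENNReal.ofReal s := by
    refine (setLIntegral_le_lintegral _ _).trans ?_
    rw [lintegral_indicator measurableSet_Ioo]
    simp
  calc _ ≤ ENNReal.ofReal 2 * (ENNReal.ofReal A * ENNReal.ofReal s) := by
        gcongr; exact hle.trans h2
    _ = _ := by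
      rw [← ENNReal.ofReal_mul hA.le, ← ENNReal.ofReal_mul (by norm_num), mul_assoc]

lemma int_small {p : ℝ} (hp : p < 2) {a : ℝ} (ha : 0 ≤ a) :
    ∫⁻ t in Ioi (0 : ℝ), ENNReal.ofReal (if a < 2 * t then a ^ 2 * t ^ (p - 3) else 0)
      ≤ ENNReal.ofReal (2 ^ (2 - p) / (2 - p) * a ^ p) := by
  rcases ha.eq_or_lt with rfl | ha
  · simp
  have hi : IntegrableOn (fun t : ℝ => a ^ 2 * t ^ (p - 3)) (Ioi (a / 2)) :=
    (integrableOn_Ioi_rpow_of_lt (by linarith) (by positivity)).const_mul _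
  have hle : ∫⁻ t in Ioi (0 : ℝ), ENNReal.ofReal (if a < 2 * t then a ^ 2 * t ^ (p - 3) else 0)
      ≤ ∫⁻ t in Ioi (a / 2), ENNReal.ofReal (a ^ 2 * t ^ (p - 3)) := by
    refine (setLIntegral_le_lintegral _ _).trans ?_
    rw [← lintegral_indicator measurableSet_Ioi]
    refine lintegral_mono fun t => ?_
    by_cases h : a < 2 * t
    · rw [indicator_of_mem (by simp only [mem_Ioi]; linarith)]
      simp [h]
    · simp [h]
  refine hle.trans ?_
  rw [← ofReal_integral_eq_lintegral_ofReal hi, integral_const_mul,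
    integral_Ioi_rpow_of_lt (by linarith) (by positivity)]
  · apply le_of_eq
    congr 1
    rw [Real.div_rpow ha.le (by norm_num), show p - 3 + 1 = p - 2 by ring,
      show 2 - p = -(p - 2) by ring, Real.rpow_neg (by norm_num), 
      show a ^ p = a ^ (p - 2) * a ^ 2 by
        rw [← Real.rpow_two, ← Real.rpow_add ha]; ring_nf]
    have : p - 2 ≠ 0 := by linarith
    have : (2 : ℝ) ^ (p - 2) ≠ 0 := by positivity
    field_simp
  · refine (ae_restrict_iff' measurableSet_Ioi).2 (ae_of_all _ fun t ht => ?_)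
    have : 0 < t := lt_trans (by positivity) ht
    simp only [Pi.zero_apply]; positivity

lemma int_large {p : ℝ} (hp : 1 < p) {a : ℝ} (ha : 0 ≤ a) :
    ∫⁻ t in Ioi (0 : ℝ), ENNReal.ofReal (if t < a then a * t ^ (p - 2) else 0)
      ≤ ENNReal.ofReal (1 / (p - 1) * a ^ p) := by
  rcases ha.eq_or_lt with rfl | ha
  · simp
  have hi : IntegrableOn (fun t : ℝ => a * t ^ (p - 2)) (Ioc 0 a) := by
    have := (intervalIntegral.intervalIntegrable_rpow' (a := 0) (b := a)
      (show -1 < p - 2 by linarith)).const_mul a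
    rwa [intervalIntegrable_iff_integrableOn_Ioc_of_le ha.le] at this
  have hle : ∫⁻ t in Ioi (0 : ℝ), ENNReal.ofReal (if t < a then a * t ^ (p - 2) else 0)
      ≤ ∫⁻ t in Ioc 0 a, ENNReal.ofReal (a * t ^ (p - 2)) := by
    rw [← lintegral_indicator measurableSet_Ioc, ← lintegral_indicator measurableSet_Ioi]
    refine lintegral_mono fun t => ?_
    by_cases h0 : 0 < t
    · by_cases h : t < a
      · simp [indicator, h, h0, h.le]
      · simp [indicator, h]
    · simp [indicator, h0]
  refine hle.trans ?_
  rw [← ofReal_integral_eq_lintegral_ofReal hi, integral_const_mul,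
    ← intervalIntegral.integral_of_le ha.le, integral_rpow (Or.inl (by linarith))]
  · apply le_of_eq
    congr 1
    rw [show p - 2 + 1 = p - 1 by ring, Real.zero_rpow (by linarith),
      show a ^ p = a ^ (p - 1) * a by
        rw [← Real.rpow_add_one ha.ne']; ring_nf]
    ring
  · refine (ae_restrict_iff' measurableSet_Ioc).2 (ae_of_all _ fun t ht => ?_)
    have : 0 < t := ht.1
    simp only [Pi.zero_apply]; positivity

lemma dist_bound {u : EuclideanSpace ℝ (Fin N) → ℝ} (hu : Measurable u) (hu0 : ∀ ξ, 0 < u ξ)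
    {A : ℝ} (hA : 0 < A) (huw : ∀ α : ℝ, 0 < α →
      ENNReal.ofReal α * volume {ξ : EuclideanSpace ℝ (Fin N) | α < u ξ} ≤ ENNReal.ofReal A)
    {f : EuclideanSpace ℝ (Fin N) → ℂ}
    (hf : ContDiff ℝ (⊤ : ℕ∞) f) (hc : HasCompactSupport f) {t : ℝ} (ht : 0 < t) :
    (volume.withDensity (fun ξ => ENNReal.ofReal (u ξ ^ 2))) {ξ | t < ‖FT f ξ‖ / u ξ}
      ≤ ENNReal.ofReal (4 * (2 * Real.pi) ^ N / t ^ 2) *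
          (∫⁻ x, ENNReal.ofReal (if ‖f x‖ < 2 * t then ‖f x‖ ^ 2 else 0))
        + ENNReal.ofReal (4 * A / t) *
          ∫⁻ x, ENNReal.ofReal (if t < ‖f x‖ then ‖f x‖ else 0) := by
  obtain ⟨g, h, hg, hgc, hh, hhc, hfe, hgb, hhb⟩ := truncate hf hc ht
  set L : ℝ := ∫ x, ‖h x‖ with hL
  have hL0 : 0 ≤ L := integral_nonneg fun _ => norm_nonneg _
  have hLe : ENNReal.ofReal L = ∫⁻ x, ENNReal.ofReal ‖h x‖ :=
    ofReal_integral_eq_lintegral_ofReal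
      (hh.continuous.integrable_of_hasCompactSupport hhc).norm (ae_of_all _ fun _ => norm_nonneg _)
  have hsub : {ξ | t < ‖FT f ξ‖ / u ξ} ⊆
      {ξ | t / 2 * u ξ ≤ ‖FT g ξ‖} ∪ {ξ | u ξ ≤ 2 * L / t} := by
    intro ξ hξ
    have hξ : t < ‖FT f ξ‖ / u ξ := hξ
    rw [lt_div_iff₀ (hu0 ξ)] at hξ
    by_contra hn
    simp only [mem_union, mem_ofPred_eq, not_or, not_le] at hn
    have h1 := hn.2
    rw [div_lt_iff₀ ht] at h1
    have h2 : ‖FT f ξ‖ ≤ ‖FT g ξ‖ + ‖FT h ξ‖ := by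
      rw [hfe, FT_add hg.continuous hgc hh.continuous hhc]
      exact norm_add_le _ _
    have h3 := FT_le h ξ
    nlinarith [hn.1]
  have m1 : MeasurableSet {ξ | t / 2 * u ξ ≤ ‖FT g ξ‖} :=
    measurableSet_le (hu.const_mul _) (FT_continuous hg hgc).norm.measurable
  have m2 : MeasurableSet {ξ | u ξ ≤ 2 * L / t} := measurableSet_le hu measurable_const
  refine (measure_mono hsub).trans ((measure_union_le _ _).trans (add_le_add ?_ ?_))
  · rw [withDensity_apply _ m1]
    calc ∫⁻ ξ in {ξ | t / 2 * u ξ ≤ ‖FT g ξ‖}, ENNReal.ofReal (u ξ ^ 2)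
        ≤ ∫⁻ ξ in {ξ | t / 2 * u ξ ≤ ‖FT g ξ‖},
            ENNReal.ofReal (4 / t ^ 2) * ENNReal.ofReal (‖FT g ξ‖ ^ 2) := by
          refine setLIntegral_mono' m1 fun ξ hξ => ?_
          have hξ : t / 2 * u ξ ≤ ‖FT g ξ‖ := hξ
          rw [← ENNReal.ofReal_mul (by positivity)]
          apply ENNReal.ofReal_le_ofReal
          have h0 : 0 ≤ t / 2 * u ξ := mul_nonneg (by positivity) (hu0 ξ).le
          have := pow_le_pow_left₀ h0 hξ 2
          rw [div_mul_eq_mul_div, le_div_iff₀ (by positivity)]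
          linarith
      _ ≤ ∫⁻ ξ, ENNReal.ofReal (4 / t ^ 2) * ENNReal.ofReal (‖FT g ξ‖ ^ 2) :=
          setLIntegral_le_lintegral _ _
      _ = ENNReal.ofReal (4 * (2 * Real.pi) ^ N / t ^ 2) * ∫⁻ x, ENNReal.ofReal (‖g x‖ ^ 2) := by
          rw [lintegral_const_mul' _ _ ENNReal.ofReal_ne_top, plancherel hg hgc, ← mul_assoc,
            ← ENNReal.ofReal_mul (by positivity)]
          congr 2
          ring
      _ ≤ _ := by
          gcongr with x
          exact hgb x
  · rw [withDensity_apply _ m2]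
    refine (weak_bound hu hu0 hA huw).trans ?_
    rw [show 2 * A * (2 * L / t) = 4 * A / t * L by ring, ENNReal.ofReal_mul (by positivity), hLe]
    gcongr with x
    exact hhb x

lemma main_lt {u : EuclideanSpace ℝ (Fin N) → ℝ} (hu : Measurable u) (hu0 : ∀ ξ, 0 < u ξ)
    {A : ℝ} (hA : 0 < A) (huw : ∀ α : ℝ, 0 < α →
      ENNReal.ofReal α * volume {ξ : EuclideanSpace ℝ (Fin N) | α < u ξ} ≤ ENNReal.ofReal A)
    {p : ℝ} (hp1 : 1 < p) (hp2 : p < 2) {f : EuclideanSpace ℝ (Fin N) → ℂ}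
    (hf : ContDiff ℝ (⊤ : ℕ∞) f) (hc : HasCompactSupport f) :
    ∫⁻ ξ, ENNReal.ofReal ((‖FT f ξ‖ / u ξ) ^ p)
        ∂(volume.withDensity (fun ξ => ENNReal.ofReal (u ξ ^ 2)))
      ≤ ENNReal.ofReal (p * (4 * (2 * Real.pi) ^ N * (2 ^ (2 - p) / (2 - p))
          + 4 * A * (1 / (p - 1)))) * ∫⁻ x, ENNReal.ofReal (‖f x‖ ^ p) := by
  have hFm : Measurable fun ξ => ‖FT f ξ‖ / u ξ :=
    (FT_continuous hf hc).norm.measurable.div hu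
  have hfm : Measurable fun x => ‖f x‖ := hf.continuous.norm.measurable
  rw [lintegral_rpow_eq_lintegral_meas_lt_mul _
    (ae_of_all _ fun ξ => div_nonneg (norm_nonneg _) (hu0 ξ).le) hFm.aemeasurable (by linarith)]
  set G : ℝ → EuclideanSpace ℝ (Fin N) → ℝ≥0∞ := fun t x =>
    ENNReal.ofReal (if ‖f x‖ < 2 * t then ‖f x‖ ^ 2 * t ^ (p - 3) else 0) with hG
  set H : ℝ → EuclideanSpace ℝ (Fin N) → ℝ≥0∞ := fun t x =>
    ENNReal.ofReal (if t < ‖f x‖ then ‖f x‖ * t ^ (p - 2) else 0) with hH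
  have hfm2 : Measurable fun z : ℝ × EuclideanSpace ℝ (Fin N) => ‖f z.2‖ :=
    hfm.comp measurable_snd
  have mG : Measurable (Function.uncurry G) := by
    refine (Measurable.ite (measurableSet_lt hfm2 (measurable_fst.const_mul 2)) ?_
      measurable_const).ennreal_ofReal
    exact (hfm2.pow_const 2).mul (measurable_fst.pow_const (p - 3))
  have mH : Measurable (Function.uncurry H) := by
    refine (Measurable.ite (measurableSet_lt measurable_fst hfm2) ?_
      measurable_const).ennreal_ofReal
    exact hfm2.mul (measurable_fst.pow_const (p - 2))
  set c1 : ℝ := 4 * (2 * Real.pi) ^ N with hc1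
  have hc1p : 0 < c1 := by positivity
  set k1 : ℝ := 2 ^ (2 - p) / (2 - p) with hk1
  have hk1p : 0 < k1 := div_pos (by positivity) (by linarith)
  set k2 : ℝ := 1 / (p - 1) with hk2
  have hk2p : 0 < k2 := div_pos (by positivity) (by linarith)
  have step : ∫⁻ t in Ioi (0 : ℝ), (volume.withDensity (fun ξ => ENNReal.ofReal (u ξ ^ 2)))
        {ξ | t < ‖FT f ξ‖ / u ξ} * ENNReal.ofReal (t ^ (p - 1))
      ≤ ∫⁻ t in Ioi (0 : ℝ), (ENNReal.ofReal c1 * ∫⁻ x, G t x)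
          + ENNReal.ofReal (4 * A) * ∫⁻ x, H t x := by
    refine setLIntegral_mono' measurableSet_Ioi fun t ht => ?_
    have ht : 0 < t := ht
    refine (mul_le_mul_left (dist_bound hu hu0 hA huw hf hc ht) _).trans (le_of_eq ?_)
    rw [add_mul]
    congr 1
    · rw [mul_right_comm, ← ENNReal.ofReal_mul (by positivity),
        show c1 / t ^ 2 * t ^ (p - 1) = c1 * t ^ (p - 3) by
          rw [show p - 1 = p - 3 + 2 by ring, Real.rpow_add ht, Real.rpow_two]
          field_simp,
        ENNReal.ofReal_mul hc1p.le, mul_assoc, ← lintegral_const_mul' _ _ ENNReal.ofReal_ne_top]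
      congr 2
      ext x
      rw [← ENNReal.ofReal_mul (by positivity)]
      simp only [hG]
      congr 1
      split_ifs <;> ring
    · rw [mul_right_comm, ← ENNReal.ofReal_mul (by positivity),
        show 4 * A / t * t ^ (p - 1) = 4 * A * t ^ (p - 2) by
          rw [show p - 1 = p - 2 + 1 by ring, Real.rpow_add_one ht.ne']
          field_simp,
        ENNReal.ofReal_mul (by positivity), mul_assoc,
        ← lintegral_const_mul' _ _ ENNReal.ofReal_ne_top]
      congr 2
      ext x
      rw [← ENNReal.ofReal_mul (by positivity)]
      simp only [hH]
      congr 1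
      split_ifs <;> ring
  have e1 : ∫⁻ t in Ioi (0 : ℝ), ∫⁻ x, G t x
      ≤ ENNReal.ofReal k1 * ∫⁻ x, ENNReal.ofReal (‖f x‖ ^ p) := by
    rw [lintegral_lintegral_swap mG.aemeasurable, ← lintegral_const_mul' _ _ ENNReal.ofReal_ne_top]
    refine lintegral_mono fun x => ?_
    rw [← ENNReal.ofReal_mul hk1p.le]
    exact int_small hp2 (norm_nonneg _)
  have e2 : ∫⁻ t in Ioi (0 : ℝ), ∫⁻ x, H t x
      ≤ ENNReal.ofReal k2 * ∫⁻ x, ENNReal.ofReal (‖f x‖ ^ p) := by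
    rw [lintegral_lintegral_swap mH.aemeasurable, ← lintegral_const_mul' _ _ ENNReal.ofReal_ne_top]
    refine lintegral_mono fun x => ?_
    rw [← ENNReal.ofReal_mul hk2p.le]
    exact int_large hp1 (norm_nonneg _)
  have mG' : Measurable fun t => ∫⁻ x, G t x := mG.lintegral_prod_right'
  rw [lintegral_add_left (mG'.const_mul _), lintegral_const_mul' _ _ ENNReal.ofReal_ne_top,
    lintegral_const_mul' _ _ ENNReal.ofReal_ne_top] at step
  calc _ ≤ ENNReal.ofReal p * (ENNReal.ofReal c1 *
          (ENNReal.ofReal k1 * ∫⁻ x, ENNReal.ofReal (‖f x‖ ^ p)) + ENNReal.ofReal (4 * A) *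
          (ENNReal.ofReal k2 * ∫⁻ x, ENNReal.ofReal (‖f x‖ ^ p))) := by
        gcongr
        exact step.trans (by gcongr)
    _ = _ := by
        rw [ENNReal.ofReal_mul (by linarith : 0 ≤ p), ENNReal.ofReal_add (by positivity) (by positivity),
          ENNReal.ofReal_mul hc1p.le, ENNReal.ofReal_mul (by positivity : 0 ≤ 4 * A)]
        ring

end Paley

/-- Hörmander's version of Paley's inequality on `ℝ^N`: if `u > 0` is
in weak-`L¹`, then for `1 < p ≤ 2`,
`(∫ |𝓕f|^p u^{2−p})^{1/p} ≤ C_p ‖f‖_{L^p}`. -/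
theorem stmt18 (N : ℕ) (hN : 1 ≤ N)
    (u : EuclideanSpace ℝ (Fin N) → ℝ) (hu : Measurable u) (hu0 : ∀ ξ, 0 < u ξ)
    (huw : ∃ A : ℝ, ∀ α : ℝ, 0 < α →
      ENNReal.ofReal α * volume {ξ : EuclideanSpace ℝ (Fin N) | α < u ξ} ≤ ENNReal.ofReal A) :
    ∀ p : ℝ, 1 < p → p ≤ 2 →
      ∃ C : ℝ, 0 < C ∧ ∀ f : EuclideanSpace ℝ (Fin N) → ℂ,
        ContDiff ℝ (⊤ : ℕ∞) f → HasCompactSupport f →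
        (∫⁻ ξ, (‖FT f ξ‖₊ : ℝ≥0∞) ^ p * ENNReal.ofReal (u ξ) ^ (2 - p)) ^ (1/p)
          ≤ ENNReal.ofReal C * (∫⁻ x, (‖f x‖₊ : ℝ≥0∞) ^ p) ^ (1/p) := by
  intro p hp1 hp2
  have hp0 : 0 < p := by linarith
  obtain ⟨A, hA⟩ := huw
  have hA' : ∀ α : ℝ, 0 < α →
      ENNReal.ofReal α * volume {ξ : EuclideanSpace ℝ (Fin N) | α < u ξ}
        ≤ ENNReal.ofReal (max A 1) := fun α hα =>
    (hA α hα).trans (ENNReal.ofReal_le_ofReal (le_max_left _ _))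
  have hApos : 0 < max A 1 := lt_of_lt_of_le one_pos (le_max_right _ _)
  have hnn : ∀ z : ℂ, (‖z‖₊ : ℝ≥0∞) ^ p = ENNReal.ofReal (‖z‖ ^ p) := fun z => by
    rw [← ENNReal.ofReal_rpow_of_nonneg (norm_nonneg _) hp0.le, ofReal_norm]
    rfl
  suffices hK : ∃ K : ℝ, 0 < K ∧ ∀ f : EuclideanSpace ℝ (Fin N) → ℂ,
        ContDiff ℝ (⊤ : ℕ∞) f → HasCompactSupport f →
        ∫⁻ ξ, (‖FT f ξ‖₊ : ℝ≥0∞) ^ p * ENNReal.ofReal (u ξ) ^ (2 - p)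
          ≤ ENNReal.ofReal K * ∫⁻ x, (‖f x‖₊ : ℝ≥0∞) ^ p by
    obtain ⟨K, hK, h⟩ := hK
    refine ⟨K ^ (1 / p), by positivity, fun f hf hc => ?_⟩
    rw [← ENNReal.ofReal_rpow_of_pos hK, ← ENNReal.mul_rpow_of_nonneg _ _ (by positivity)]
    exact ENNReal.rpow_le_rpow (h f hf hc) (by positivity)
  simp_rw [hnn]
  rcases hp2.eq_or_lt with rfl | hp2
  · refine ⟨(2 * Real.pi) ^ N, by positivity, fun f hf hc => ?_⟩
    simpa using (Paley.plancherel hf hc).le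
  · refine ⟨p * (4 * (2 * Real.pi) ^ N * (2 ^ (2 - p) / (2 - p))
          + 4 * (max A 1) * (1 / (p - 1))), ?_, fun f hf hc => ?_⟩
    · have h1 : 0 < 2 - p := by linarith
      have h2 : 0 < p - 1 := by linarith
      positivity
    refine le_trans (le_of_eq ?_) (Paley.main_lt hu hu0 hApos hA' hp1 hp2 hf hc)
    have hm : Measurable fun ξ => ENNReal.ofReal ((‖FT f ξ‖ / u ξ) ^ p) :=
      (((Paley.FT_continuous hf hc).norm.measurable.div hu).pow_const p).ennreal_ofReal
    rw [lintegral_withDensity_eq_lintegral_mul _ (hu.pow_const 2).ennreal_ofReal hm]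
    refine lintegral_congr fun ξ => ?_
    have hpos := hu0 ξ
    simp only [Pi.mul_apply]
    rw [ENNReal.ofReal_rpow_of_pos hpos, ← ENNReal.ofReal_mul (by positivity),
      ← ENNReal.ofReal_mul (by positivity), Real.div_rpow (norm_nonneg _) hpos.le,
      Real.rpow_sub hpos, Real.rpow_two]
    congr 1
    ring
end
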